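/- Entropy dissipation: let n be a nonnegative bounded solution of the Kompaneets equation with initial data n₀, not identically 0, satisfying n₀(x) ≤ C₀(1 + x²)e^{−x} for all x > 0 and some constant C₀ > 0. Then for every t > 0, (d/dt) H(n(·,t)) + ∫₀^∞ J(x, n(·,t))² / ( n(x,t)(n(x,t) + x²) ) dx = 0, where H is the quantum entropy functional. -/

import Mathlib

/-!
Write `h (x, u)` for the entropy density and `q = ∂_u h = x + log (n / (n + x²))`.  The algebraic
reason for the identity is `∂ₓ q = J / (n (n + x²))` (`IsKompSol.entPotential_hasDerivAt`): formally
`d/dt H = ∫ q ∂ₓJ dx = -∫ ∂ₓq J dx = -∫ J² / (n (n + x²)) dx`.  What has to be justified is the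
differentiation under the integral, the integrability of `h` and of the dissipation, and the
vanishing of the boundary terms `q J` at `0` and `∞`, although nothing is prescribed at `x = 0` and
the equation is only known pointwise, without continuity of the derivatives.

In the variable `y = log x` the function `g (y, t) = n (exp y, t)` solves
`g_t = g_yy + (e^y - 1 + 2 e^{-y} g) g_y + (2 e^y - 2) g` (`LogSol`, `IsKompSol.logSol`), a uniformly
parabolic equation with lower order coefficients of size `e^{|y|}`.  Everything rests on a maximum
principle needing pointwise derivatives only (`parabolic_max_principle`):

* comparison with explicit barriers shows that `n` either vanishes for all `t > 0` or is positive
  (`LogSol.zero_or_pos`), decays like `x ^ (-12)` at infinity (`LogSol.exp_decay`), and is at least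
  `ε exp (-κ (1 - log x)²)` near zero (`LogSol.gaussian_lower_bound`), all locally uniformly in
  `t > 0`;
* doubling of variables gives a logarithmic gradient estimate for positive solutions
  (`log_gradient_estimate`), which at the scale `e^{-|y|}` reads
  `|g_y| ≤ C e^{|y|} g (2 + log (m / g))²` for a majorant `m` of `g` (`LogSol.gradient_bound`).

Together these bound `h`, `J² / (n (n + x²))` and `q J / x` by a multiple of the integrable weight
`x ^ (-1/2)` on `(0, 1]`, `x ^ (-2)` on `(1, ∞)`, locally uniformly in time
(`IsKompSol.pointwise_bounds`).  The same gradient estimate for difference quotients in `y` bounds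
`g_yy`, hence `g_t`, locally (`LogSol.gt_locally_bounded`), so the entropy over a compact interval
`[a, b]` of `(0, ∞)` can be differentiated under the integral and integrated by parts
(`IsKompSol.truncated_hasDerivAt`).  As `[a, b]` exhausts `(0, ∞)` the derivatives converge locally
uniformly in time, by the bounds with the weight, which gives the theorem.
-/

open MeasureTheory Filter Set Real Topology

/-- The Kompaneets photon flux `J(x,u) = x² u'(x) + (x² - 2x) u(x) + u(x)²`. -/
noncomputable def kompFlux (u : ℝ → ℝ) (x : ℝ) : ℝ :=
  x ^ 2 * deriv u x + (x ^ 2 - 2 * x) * u x + u x ^ 2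

/-- The quantum entropy functional
`H(u) = ∫₀^∞ ( x u + u ln u - (u + x²) ln(u + x²) + x² ln(x²) ) dx`. -/
noncomputable def Hent (u : ℝ → ℝ) : ℝ :=
  ∫ x in Set.Ioi (0:ℝ),
    (x * u x + u x * Real.log (u x) - (u x + x ^ 2) * Real.log (u x + x ^ 2)
      + x ^ 2 * Real.log (x ^ 2))

/-- A (global-in-time) nonnegative solution of the Kompaneets equation
`∂ₜ n = ∂ₓ J(x, n(·,t))` on `(0,∞) × (0,∞)` with initial data `n₀`:
nonnegative, bounded, `C^{2,1}` in the interior, attaining the initial data,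
continuous into `L¹`, and with `x² n → 0` and `x² ∂ₓ n → 0` as `x → ∞`,
uniformly on the indicated time sets.  No boundary condition at `x = 0`. -/
structure IsKompSol (n : ℝ → ℝ → ℝ) (n₀ : ℝ → ℝ) : Prop where
  nonneg : ∀ x t : ℝ, 0 < x → 0 < t → 0 ≤ n x t
  bounded : ∃ M : ℝ, ∀ x t : ℝ, 0 < x → 0 < t → n x t ≤ M
  init : ∀ x : ℝ, 0 < x → n x 0 = n₀ x
  contOn : ContinuousOn (fun p : ℝ × ℝ => n p.1 p.2)
    ((Set.Ioi (0:ℝ)) ×ˢ (Set.Ioi (0:ℝ)))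
  diff_x : ∀ t : ℝ, 0 < t → ∀ x : ℝ, 0 < x → DifferentiableAt ℝ (fun y => n y t) x
  diff_xx : ∀ t : ℝ, 0 < t → ∀ x : ℝ, 0 < x →
    DifferentiableAt ℝ (deriv (fun y => n y t)) x
  diff_t : ∀ x : ℝ, 0 < x → ∀ t : ℝ, 0 < t → DifferentiableAt ℝ (fun τ => n x τ) t
  pde : ∀ x : ℝ, 0 < x → ∀ t : ℝ, 0 < t →
    deriv (fun τ => n x τ) t = deriv (fun y => kompFlux (fun z => n z t) y) x
  l1init : Filter.Tendsto (fun t => ∫ x in Set.Ioi (0:ℝ), |n x t - n₀ x|)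
    (𝓝[>] (0:ℝ)) (nhds 0)
  decay : ∀ T : ℝ, 0 < T → ∀ ε : ℝ, 0 < ε → ∃ R : ℝ, 0 < R ∧
    ∀ x : ℝ, R ≤ x → ∀ t : ℝ, 0 ≤ t → t < T → x ^ 2 * n x t < ε
  decay' : ∀ T : ℝ, 0 < T → ∀ ε : ℝ, 0 < ε → ∃ R : ℝ, 0 < R ∧
    ∀ x : ℝ, R ≤ x → ∀ t : ℝ, 1 / x ^ 2 ≤ t → t < T →
      |x ^ 2 * deriv (fun y => n y t) x| < ε

/-! ### The parabolic maximum principle -/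

/-- First and second derivative tests at a local maximum, with the derivatives given as data. -/
lemma localMax_deriv_test {f f' : ℝ → ℝ} {a c : ℝ} (hmax : IsLocalMax f a)
    (h1 : ∀ᶠ y in 𝓝 a, HasDerivAt f (f' y) y) (h2 : HasDerivAt f' c a) :
    f' a = 0 ∧ c ≤ 0 := by
  have h0 : f' a = 0 := hmax.hasDerivAt_eq_zero h1.self_of_nhds
  refine ⟨h0, ?_⟩
  by_contra hc
  push Not at hc
  have hd : deriv f =ᶠ[𝓝 a] f' := h1.mono fun y hy => hy.deriv
  have hdd : deriv (deriv f) a = c := by rw [hd.deriv_eq, h2.deriv]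
  have hmin : IsLocalMin f a := by
    refine isLocalMin_of_deriv_deriv_pos (by rw [hdd]; exact hc) (by rw [hd.self_of_nhds, h0]) ?_
    exact h1.self_of_nhds.continuousAt
  have hconst : f =ᶠ[𝓝 a] fun _ => f a := by
    filter_upwards [hmax, hmin] with y hy1 hy2 using le_antisymm hy1 hy2
  have h3 : deriv f =ᶠ[𝓝 a] fun _ => 0 := by
    have := hconst.deriv
    simpa using this
  have : deriv (deriv f) a = 0 := by rw [h3.deriv_eq]; simp
  linarith

lemma deriv_nonneg_of_left_max {f : ℝ → ℝ} {t c : ℝ}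
    (hmax : ∀ᶠ s in 𝓝[<] t, f s ≤ f t) (h : HasDerivAt f c t) : 0 ≤ c := by
  have h1 : Tendsto (slope f t) (𝓝[<] t) (𝓝 c) :=
    h.tendsto_slope.mono_left (nhdsWithin_mono _ fun x hx => ne_of_lt hx)
  refine ge_of_tendsto h1 ?_
  filter_upwards [hmax, self_mem_nhdsWithin] with s hs hs'
  rw [slope_def_field]
  have hs'' : s < t := hs'
  exact div_nonneg_of_nonpos (by linarith) (by linarith)

/-- Weak parabolic maximum principle on a compact set `K` of space-time, requiring only the
existence of pointwise derivatives.  A point where `w > 0` must be interior in space and have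
its immediate past in `K`; the derivative conditions of a positive maximum must be impossible. -/
lemma parabolic_max_principle {K : Set (ℝ × ℝ)} (hK : IsCompact K) {w : ℝ → ℝ → ℝ}
    (hw : ContinuousOn (fun p : ℝ × ℝ => w p.1 p.2) K)
    (h : ∀ y t, (y, t) ∈ K → 0 < w y t →
      (∀ᶠ y' in 𝓝 y, (y', t) ∈ K) ∧ (∀ᶠ t' in 𝓝[<] t, (y, t') ∈ K) ∧
      ∃ (wy : ℝ → ℝ) (wyy wt : ℝ), (∀ᶠ y' in 𝓝 y, HasDerivAt (fun z => w z t) (wy y') y') ∧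
        HasDerivAt wy wyy y ∧ HasDerivAt (fun s => w y s) wt t ∧
        (wy y = 0 → wyy ≤ 0 → 0 ≤ wt → False)) :
    ∀ y t, (y, t) ∈ K → w y t ≤ 0 := by
  intro y t hyt
  by_contra hpos
  push Not at hpos
  obtain ⟨⟨y₁, t₁⟩, hmem, hmax⟩ := hK.exists_isMaxOn ⟨_, hyt⟩ hw
  have hp1 : 0 < w y₁ t₁ := lt_of_lt_of_le hpos (hmax hyt)
  obtain ⟨hy, ht, wy, wyy, wt, hd1, hd2, hd3, hF⟩ := h y₁ t₁ hmem hp1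
  have hloc : IsLocalMax (fun z => w z t₁) y₁ := hy.mono fun z hz => hmax hz
  obtain ⟨e1, e2⟩ := localMax_deriv_test hloc hd1 hd2
  have e3 := deriv_nonneg_of_left_max (f := fun s => w y₁ s) (ht.mono fun s hs => hmax hs) hd3
  exact hF e1 e2 e3

/-! ### A logarithmic gradient estimate by doubling of variables -/

/-- Elementary bounds for the coefficients produced by the quadratic gradient terms
`1 / v² - 2 / v = a² - 2 a`, where `a = 1 / v ≥ 2`. -/
lemma cubic_weight_bounds {a b : ℝ} (ha : 2 ≤ a) (hb : 2 ≤ b) :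
    16 ≤ a * b * (a + b) ∧ a * b * (a + b) / 2 ≤ a * b * (a + b - 2) ∧
      a ^ 2 - 2 * a + (b ^ 2 - 2 * b) ≤ a * b * (a + b) / 2 ∧
      0 ≤ a ^ 2 - 2 * a + (b ^ 2 - 2 * b) := by
  have h4 : 4 ≤ a * b := by nlinarith
  refine ⟨by nlinarith, ?_, ?_, by nlinarith⟩
  · nlinarith [mul_nonneg (by linarith : 0 ≤ a * b) (by linarith : 0 ≤ a + b - 4)]
  · nlinarith [mul_nonneg (sq_nonneg a) (by linarith : 0 ≤ b - 2),
      mul_nonneg (sq_nonneg b) (by linarith : 0 ≤ a - 2)]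

/-- The quadratic gradient terms at the two points have a good sign: with `a = 1/v(x)`,
`b = 1/v(y)`, their difference is damped like `W A²`. -/
lemma quadratic_terms_damping {a b A e W r : ℝ} (ha : 2 ≤ a) (hb : 2 ≤ b)
    (hW : 0 < W) (hA : 0 < A) (hab : a - b = -(W * (a * b))) (he : e ≤ W * r) (hr : 0 ≤ r)
    (hrA : r ≤ A / 8) :
    (a ^ 2 - 2 * a) * (A + e) ^ 2 - (b ^ 2 - 2 * b) * (A - e) ^ 2 ≤ -(4 * W * A ^ 2) := by
  obtain ⟨hP16, e2, e3, e3'⟩ := cubic_weight_bounds ha hb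
  generalize hP : a * b * (a + b) = P at *
  have e1 : (a ^ 2 - 2 * a) * (A + e) ^ 2 - (b ^ 2 - 2 * b) * (A - e) ^ 2
      = -(W * (a * b * (a + b - 2)) * (A ^ 2 + e ^ 2))
        + (a ^ 2 - 2 * a + (b ^ 2 - 2 * b)) * (2 * A * e) := by
    linear_combination (a + b - 2) * (A ^ 2 + e ^ 2) * hab
  have e4 : W * (P / 2) * A ^ 2 ≤ W * (a * b * (a + b - 2)) * (A ^ 2 + e ^ 2) := by
    have : W * (P / 2) ≤ W * (a * b * (a + b - 2)) := mul_le_mul_of_nonneg_left e2 hW.le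
    refine mul_le_mul this (le_add_of_nonneg_right (sq_nonneg e)) (sq_nonneg A) ?_
    exact mul_nonneg hW.le (by linarith)
  have e5 : (a ^ 2 - 2 * a + (b ^ 2 - 2 * b)) * (2 * A * e) ≤ P / 2 * (2 * A * (W * r)) := by
    have h1 : 2 * A * e ≤ 2 * A * (W * r) := mul_le_mul_of_nonneg_left he (by linarith)
    have h2 : 0 ≤ 2 * A * (W * r) := by positivity
    calc _ ≤ (a ^ 2 - 2 * a + (b ^ 2 - 2 * b)) * (2 * A * (W * r)) :=
          mul_le_mul_of_nonneg_left h1 e3'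
      _ ≤ _ := mul_le_mul_of_nonneg_right e3 h2
  have hP0 : 0 ≤ P := by linarith
  have h3 : 0 ≤ P * A * W := by positivity
  have e6 := mul_le_mul_of_nonneg_left hrA h3
  have e7 : 16 * (W * A ^ 2) ≤ P * (W * A ^ 2) := mul_le_mul_of_nonneg_right hP16 (by positivity)
  have h4 : 0 ≤ W * A ^ 2 := by positivity
  rw [e1]
  linarith

set_option maxHeartbeats 1000000 in
/-- The algebraic contradiction at a positive maximum of the doubled function
`ρ(m, τ) (v(m + d/2, τ) - v(m - d/2, τ)) - K (d - q d²)`.  Here `X, Y` and `α, β` are the second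
and first space derivatives of `v` at the two points, `T, S` the time derivatives, and
`ρm, ρt` the derivatives of the cutoff `ρ`. -/
lemma doubling_contradiction {B vx vy ρ ρm ρt α β X Y T S p : ℝ} (hB : 0 ≤ B)
    (hvx : 0 < vx) (hvx' : vx ≤ 1 / 2) (hvy : 0 < vy) (hvy' : vy ≤ 1 / 2) (hW : 0 < vx - vy)
    (hρ : 0 < ρ) (hρ1 : ρ ≤ 1) (hρm : |ρm| ≤ 2) (hρt : ρt ≤ 1)
    (hp : 1 / 2 ≤ p) (hp1 : p ≤ 1)
    (hm : ρ * (α - β) + ρm * (vx - vy) = 0)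
    (hd : ρ * ((α + β) / 2) = (16 + 8 * B) * p)
    (hdd : ρ * ((X - Y) / 4) + 2 * (B + 1) * (16 + 8 * B) ≤ 0)
    (ht : 0 ≤ ρ * (T - S) + ρt * (vx - vy))
    (hx : |T - X - (1 / vx ^ 2 - 2 / vx) * α ^ 2| ≤ B * |α| + B * vx ^ 2)
    (hy : |S - Y - (1 / vy ^ 2 - 2 / vy) * β ^ 2| ≤ B * |β| + B * vy ^ 2) : False := by
  obtain ⟨W, hWd⟩ : ∃ W, W = vx - vy := ⟨_, rfl⟩
  obtain ⟨r, hr⟩ : ∃ r, r = 1 / ρ := ⟨_, rfl⟩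
  obtain ⟨a, ha⟩ : ∃ a, a = 1 / vx := ⟨_, rfl⟩
  obtain ⟨b, hb⟩ : ∃ b, b = 1 / vy := ⟨_, rfl⟩
  obtain ⟨A, hA⟩ : ∃ A, A = (α + β) / 2 := ⟨_, rfl⟩
  obtain ⟨e, he⟩ : ∃ e, e = (α - β) / 2 := ⟨_, rfl⟩
  rw [← hWd] at hW hm ht
  have hrρ : r * ρ = 1 := by rw [hr]; field_simp
  have hr1 : 1 ≤ r := by rw [hr, le_div_iff₀ hρ]; linarith
  have hA1 : A = (16 + 8 * B) * p * r := by
    have : A * (r * ρ) = (16 + 8 * B) * p * r := by rw [← hd, hA]; ring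
    rwa [hrρ, mul_one] at this
  have he1 : e = -(ρm * W * r) / 2 := by
    have : e * (r * ρ) = -(ρm * W * r) / 2 := by
      rw [he]; linear_combination r / 2 * hm
    rwa [hrρ, mul_one] at this
  have hαe : α = A + e := by rw [hA, he]; ring
  have hβe : β = A - e := by rw [hA, he]; ring
  have hWr : 0 < W * r := by positivity
  have heabs : |e| ≤ W * r := by
    rw [he1, abs_div, abs_neg, mul_assoc, abs_mul, abs_of_pos hWr, abs_two]
    linarith [mul_le_mul_of_nonneg_right hρm hWr.le]
  have hK0 : 0 < (16 + 8 * B) * r := by positivity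
  have hAlow : (8 + 4 * B) * r ≤ A := by
    rw [hA1, mul_right_comm]
    nlinarith only [hK0, hp]
  have hAup : A ≤ (16 + 8 * B) * r := by
    rw [hA1, mul_right_comm]
    nlinarith only [hK0, hp1]
  have hA0 : 0 < A := lt_of_lt_of_le (by positivity) hAlow
  have ha2 : 2 ≤ a := by rw [ha, le_div_iff₀ hvx]; linarith
  have hb2 : 2 ≤ b := by rw [hb, le_div_iff₀ hvy]; linarith
  have hXY : X - Y ≤ -(8 * (B + 1) * (16 + 8 * B) * r) := by
    have : r * (ρ * ((X - Y) / 4) + 2 * (B + 1) * (16 + 8 * B)) ≤ 0 :=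
      mul_nonpos_of_nonneg_of_nonpos (by linarith) hdd
    have h2 : (r * ρ) * ((X - Y) / 4) + 2 * (B + 1) * (16 + 8 * B) * r ≤ 0 := by linarith
    rw [hrρ] at h2; linarith
  have hTS : -(W * r) ≤ T - S := by
    have h1 : 0 ≤ r * (ρ * (T - S) + ρt * W) := mul_nonneg (by linarith) ht
    have h2 : 0 ≤ (r * ρ) * (T - S) + ρt * (W * r) := by linarith
    have h3 : ρt * (W * r) ≤ 1 * (W * r) := mul_le_mul_of_nonneg_right hρt hWr.le
    rw [hrρ] at h2; linarith
  have hG1 : 1 / vx ^ 2 - 2 / vx = a ^ 2 - 2 * a := by rw [ha]; field_simp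
  have hG2 : 1 / vy ^ 2 - 2 / vy = b ^ 2 - 2 * b := by rw [hb]; field_simp
  have hab : a - b = -(W * (a * b)) := by rw [hWd, ha, hb]; field_simp; ring
  rw [hG1] at hx
  rw [hG2] at hy
  have hGG : (a ^ 2 - 2 * a) * α ^ 2 - (b ^ 2 - 2 * b) * β ^ 2 ≤ -(4 * W * A ^ 2) := by
    rw [hαe, hβe]
    refine quadratic_terms_damping ha2 hb2 hW hA0 hab ((le_abs_self e).trans heabs) (by linarith) ?_
    linarith [mul_nonneg hB (by linarith : 0 ≤ r)]
  have hα : |α| ≤ A + W * r := by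
    rw [hαe]; calc _ ≤ |A| + |e| := abs_add_le _ _
      _ ≤ _ := by rw [abs_of_pos hA0]; linarith
  have hβ : |β| ≤ A + W * r := by
    rw [hβe]; calc _ ≤ |A| + |e| := abs_sub _ _
      _ ≤ _ := by rw [abs_of_pos hA0]; linarith
  have hx' := (abs_le.1 hx).2
  have hy' := (abs_le.1 hy).1
  have hBα := mul_le_mul_of_nonneg_left hα hB
  have hBβ := mul_le_mul_of_nonneg_left hβ hB
  have hBv : B * vx ^ 2 ≤ B * (1 / 4) := mul_le_mul_of_nonneg_left (by nlinarith) hB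
  have hBv' : B * vy ^ 2 ≤ B * (1 / 4) := mul_le_mul_of_nonneg_left (by nlinarith) hB
  have hBA : B * A ≤ B * ((16 + 8 * B) * r) := mul_le_mul_of_nonneg_left hAup hB
  have hBr : 0 ≤ B * r := mul_nonneg hB (by linarith)
  have hfin : W * (r + 2 * B * r) ≤ W * (4 * A ^ 2) := by
    refine mul_le_mul_of_nonneg_left ?_ hW.le
    have h1 : r + 2 * B * r ≤ A := by linarith
    have h2 : 1 ≤ A := by linarith
    have h3 : A * 1 ≤ A * A := mul_le_mul_of_nonneg_left h2 hA0.le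
    linarith
  have hfin2 : B / 2 < 8 * (B + 1) * (16 + 8 * B) * r - 2 * B * ((16 + 8 * B) * r) := by
    have : 0 ≤ B * (B * r) := mul_nonneg hB hBr
    have : B * 1 ≤ B * r := mul_le_mul_of_nonneg_left hr1 hB
    linarith
  linarith

set_option maxHeartbeats 1000000 in
/-- Bernstein-type gradient bound on a unit parabolic cylinder.  The function `v` is to be thought
of as `1 / (2 + log (M / u))` with `u ≤ M` an almost-solution of the heat equation; this
substitution creates the favourable term `(1 / v² - 2 / v) v_z²`.  As `v` need not have third
derivatives, the equation is not differentiated: the bound comes from the maximum principle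
applied to the doubled function `v(m + d/2) - v(m - d/2)`. -/
lemma unit_one_sided_gradient {B : ℝ} (hB : 0 ≤ B) {v vz vzz vt : ℝ → ℝ → ℝ}
    (hc : ContinuousOn (fun p : ℝ × ℝ => v p.1 p.2) (Icc (-2) 2 ×ˢ Icc (-1) 0))
    (h1 : ∀ z ∈ Icc (-2:ℝ) 2, ∀ τ ∈ Icc (-1:ℝ) 0, HasDerivAt (fun y => v y τ) (vz z τ) z)
    (h2 : ∀ z ∈ Icc (-2:ℝ) 2, ∀ τ ∈ Icc (-1:ℝ) 0, HasDerivAt (fun y => vz y τ) (vzz z τ) z)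
    (h3 : ∀ z ∈ Icc (-2:ℝ) 2, ∀ τ ∈ Icc (-1:ℝ) 0, HasDerivAt (fun s => v z s) (vt z τ) τ)
    (hpos : ∀ z ∈ Icc (-2:ℝ) 2, ∀ τ ∈ Icc (-1:ℝ) 0, 0 < v z τ)
    (hle : ∀ z ∈ Icc (-2:ℝ) 2, ∀ τ ∈ Icc (-1:ℝ) 0, v z τ ≤ 1 / 2)
    (heq : ∀ z ∈ Icc (-2:ℝ) 2, ∀ τ ∈ Icc (-1:ℝ) 0,
      |vt z τ - vzz z τ - (1 / v z τ ^ 2 - 2 / v z τ) * vz z τ ^ 2|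
        ≤ B * |vz z τ| + B * v z τ ^ 2) :
    vz 0 0 ≤ 16 + 8 * B := by
  set q : ℝ := B + 1 with hq
  -- On `0 ≤ d ≤ D` the slope `1 - 2 q d` of the penalty is at least `1 / 2`, and at `d = D` the
  -- penalty `(16 + 8 B) (d - q d²)` exceeds `1 / 2`, the largest possible oscillation of `v`.
  set D : ℝ := 1 / (4 * q) with hD
  have hq1 : 1 ≤ q := by linarith
  have hqD : q * D = 1 / 4 := by rw [hD]; field_simp
  have hD0 : 0 < D := by positivity
  have hD1 : D ≤ 1 / 4 := by nlinarith
  -- the doubled function in the variables `(m, d, τ)`, midpoint, distance and time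
  let Φ : ℝ → ℝ → ℝ → ℝ := fun m d τ =>
    (1 - m ^ 2) * (1 + τ) * (v (m + d / 2) τ - v (m - d / 2) τ) - (16 + 8 * B) * (d - q * d ^ 2)
  have hin : ∀ m ∈ Icc (-1:ℝ) 1, ∀ d ∈ Icc (0:ℝ) D,
      m + d / 2 ∈ Icc (-2:ℝ) 2 ∧ m - d / 2 ∈ Icc (-2:ℝ) 2 := by
    rintro m ⟨hm, hm'⟩ d ⟨hd, hd'⟩
    exact ⟨⟨by linarith, by linarith⟩, ⟨by linarith, by linarith⟩⟩
  have key : ∀ m ∈ Icc (-1:ℝ) 1, ∀ d ∈ Icc (0:ℝ) D, ∀ τ ∈ Icc (-1:ℝ) 0, Φ m d τ ≤ 0 := by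
    by_contra hcon
    push Not at hcon
    obtain ⟨m₀, hm₀, d₀, hd₀, τ₀, hτ₀, hpos₀⟩ := hcon
    have hcomp : IsCompact (Icc (-1:ℝ) 1 ×ˢ (Icc (0:ℝ) D ×ˢ Icc (-1:ℝ) 0)) :=
      isCompact_Icc.prod (isCompact_Icc.prod isCompact_Icc)
    have hcont : ContinuousOn (fun p : ℝ × ℝ × ℝ => Φ p.1 p.2.1 p.2.2)
        (Icc (-1:ℝ) 1 ×ˢ (Icc (0:ℝ) D ×ˢ Icc (-1:ℝ) 0)) := by
      have c1 : ContinuousOn (fun p : ℝ × ℝ × ℝ => v (p.1 + p.2.1 / 2) p.2.2)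
          (Icc (-1:ℝ) 1 ×ˢ (Icc (0:ℝ) D ×ˢ Icc (-1:ℝ) 0)) :=
        hc.comp (f := fun p : ℝ × ℝ × ℝ => (p.1 + p.2.1 / 2, p.2.2)) (by fun_prop)
          fun p hp => ⟨(hin _ hp.1 _ hp.2.1).1, hp.2.2⟩
      have c2 : ContinuousOn (fun p : ℝ × ℝ × ℝ => v (p.1 - p.2.1 / 2) p.2.2)
          (Icc (-1:ℝ) 1 ×ˢ (Icc (0:ℝ) D ×ˢ Icc (-1:ℝ) 0)) :=
        hc.comp (f := fun p : ℝ × ℝ × ℝ => (p.1 - p.2.1 / 2, p.2.2)) (by fun_prop)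
          fun p hp => ⟨(hin _ hp.1 _ hp.2.1).2, hp.2.2⟩
      have c3 : ContinuousOn (fun p : ℝ × ℝ × ℝ => (1 - p.1 ^ 2) * (1 + p.2.2))
          (Icc (-1:ℝ) 1 ×ˢ (Icc (0:ℝ) D ×ˢ Icc (-1:ℝ) 0)) := by fun_prop
      have c4 : ContinuousOn (fun p : ℝ × ℝ × ℝ => (16 + 8 * B) * (p.2.1 - q * p.2.1 ^ 2))
          (Icc (-1:ℝ) 1 ×ˢ (Icc (0:ℝ) D ×ˢ Icc (-1:ℝ) 0)) := by fun_prop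
      exact (c3.mul (c1.sub c2)).sub c4
    obtain ⟨⟨m, d, τ⟩, ⟨hm, hd, hτ⟩, hmax⟩ :=
      hcomp.exists_isMaxOn ⟨(m₀, d₀, τ₀), hm₀, hd₀, hτ₀⟩ hcont
    simp only at hm hd hτ
    have hΦ : 0 < Φ m d τ := lt_of_lt_of_le hpos₀ (hmax (a := (m₀, d₀, τ₀)) ⟨hm₀, hd₀, hτ₀⟩)
    have hmx : ∀ m' ∈ Icc (-1:ℝ) 1, ∀ d' ∈ Icc (0:ℝ) D, ∀ τ' ∈ Icc (-1:ℝ) 0,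
        Φ m' d' τ' ≤ Φ m d τ := fun m' hm' d' hd' τ' hτ' =>
      hmax (a := (m', d', τ')) ⟨hm', hd', hτ'⟩
    obtain ⟨hx, hy⟩ := hin m hm d hd
    have hψ : 0 ≤ d - q * d ^ 2 := by
      have := mul_le_mul_of_nonneg_left hd.2 (by linarith : 0 ≤ q)
      nlinarith only [this, hd.1, hqD]
    obtain ⟨ρ, hρdef⟩ : ∃ ρ, ρ = (1 - m ^ 2) * (1 + τ) := ⟨_, rfl⟩
    have hΦ' : 0 < ρ * (v (m + d / 2) τ - v (m - d / 2) τ) - (16 + 8 * B) * (d - q * d ^ 2) := by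
      rw [hρdef]; exact hΦ
    have hm2 : m ^ 2 ≤ 1 := by nlinarith [hm.1, hm.2]
    have hρ0 : 0 ≤ ρ := by
      rw [hρdef]; exact mul_nonneg (by linarith) (by linarith [hτ.1])
    have hprod : 0 < ρ * (v (m + d / 2) τ - v (m - d / 2) τ) := by
      linarith [mul_nonneg (by linarith : 0 ≤ 16 + 8 * B) hψ]
    have hρ : 0 < ρ := by
      rcases hρ0.lt_or_eq with h | h
      · exact h
      · rw [← h] at hprod; simp at hprod
    have hW : 0 < v (m + d / 2) τ - v (m - d / 2) τ := (mul_pos_iff_of_pos_left hρ).1 hprod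
    have hρ1 : ρ ≤ 1 := by rw [hρdef]; nlinarith only [hτ.1, hτ.2, sq_nonneg m, hm2]
    have hd0 : 0 < d := by
      rcases hd.1.lt_or_eq with h | h
      · exact h
      · rw [← h] at hW; simp at hW
    have hm2' : 0 < 1 - m ^ 2 := by
      rcases (by linarith : 0 ≤ 1 - m ^ 2).lt_or_eq with h | h
      · exact h
      · rw [hρdef, ← h] at hρ; simp at hρ
    have hτ0 : -1 < τ := by
      rcases hτ.1.lt_or_eq with h | h
      · exact h
      · rw [hρdef, ← h] at hρ; simp at hρ
    have hmlt : -1 < m ∧ m < 1 := by constructor <;> nlinarith only [hm2', hm.1, hm.2]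
    have hdD : d < D := by
      rcases hd.2.lt_or_eq with h | h
      · exact h
      · exfalso
        have e1 : ρ * (v (m + d / 2) τ - v (m - d / 2) τ) ≤ 1 / 2 := by
          have := hle _ hx τ hτ
          have := hpos _ hy τ hτ
          nlinarith only [this, hρ1, hρ0, hW, hle _ hx τ hτ]
        have e2 : d - q * d ^ 2 = 3 / 4 * D := by rw [h]; linear_combination (-D) * hqD
        have e3 : (16 + 8 * B) * (3 / 4 * D) = 6 * D + 6 * (q * D) := by rw [hq]; ring
        rw [e2, e3, hqD] at hΦ'
        linarith
    have hxy1 := h1 _ hx τ hτ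
    have hxy2 := h1 _ hy τ hτ
    -- stationarity in the midpoint
    have st_m : ρ * (vz (m + d / 2) τ - vz (m - d / 2) τ)
        + (-(2 * m) * (1 + τ)) * (v (m + d / 2) τ - v (m - d / 2) τ) = 0 := by
      have hl : IsLocalMax (fun m' => Φ m' d τ) m := by
        filter_upwards [Icc_mem_nhds hmlt.1 hmlt.2] with m' hm'
        exact hmx m' hm' d hd τ hτ
      have hder : HasDerivAt (fun m' => Φ m' d τ)
          (((-(2 * m)) * (1 + τ)) * (v (m + d / 2) τ - v (m - d / 2) τ)
            + (1 - m ^ 2) * (1 + τ) * (vz (m + d / 2) τ - vz (m - d / 2) τ)) m := by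
        have e1 : HasDerivAt (fun m' : ℝ => (1 - m' ^ 2) * (1 + τ)) ((-(2 * m)) * (1 + τ)) m := by
          have := ((hasDerivAt_pow 2 m).const_sub 1).mul_const (1 + τ)
          simpa using this
        have e2 : HasDerivAt (fun m' : ℝ => v (m' + d / 2) τ) (vz (m + d / 2) τ) m :=
          HasDerivAt.comp_add_const m (d / 2) hxy1
        have e3 : HasDerivAt (fun m' : ℝ => v (m' - d / 2) τ) (vz (m - d / 2) τ) m :=
          HasDerivAt.comp_sub_const m (d / 2) hxy2
        exact (e1.mul (e2.sub e3)).sub_const _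
      have := hl.hasDerivAt_eq_zero hder
      rw [hρdef]; linarith
    -- first and second order conditions in the distance
    have st_d : ρ * ((vz (m + d / 2) τ + vz (m - d / 2) τ) / 2) - (16 + 8 * B) * (1 - 2 * q * d) = 0
        ∧ ρ * ((vzz (m + d / 2) τ - vzz (m - d / 2) τ) / 4) - (16 + 8 * B) * (-(2 * q)) ≤ 0 := by
      have hl : IsLocalMax (fun d' => Φ m d' τ) d := by
        filter_upwards [Icc_mem_nhds hd0 hdD] with d' hd'
        exact hmx m hm d' hd' τ hτ
      have a1 : ∀ d' : ℝ, HasDerivAt (fun d' : ℝ => m + d' / 2) (1 / 2) d' := fun d' =>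
        ((hasDerivAt_id d').div_const 2).const_add m
      have a2 : ∀ d' : ℝ, HasDerivAt (fun d' : ℝ => m - d' / 2) (-(1 / 2)) d' := fun d' =>
        ((hasDerivAt_id d').div_const 2).const_sub m
      refine localMax_deriv_test (f' := fun d' =>
        ρ * ((vz (m + d' / 2) τ + vz (m - d' / 2) τ) / 2) - (16 + 8 * B) * (1 - 2 * q * d')) hl ?_ ?_
      · filter_upwards [Icc_mem_nhds hd0 hdD] with d' hd'
        obtain ⟨hx', hy'⟩ := hin m hm d' hd'
        have e2 := (h1 _ hx' τ hτ).comp d' (a1 d')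
        have e3 := (h1 _ hy' τ hτ).comp d' (a2 d')
        have e4 : HasDerivAt (fun d' : ℝ => d' - q * d' ^ 2) (1 - q * (2 * d')) d' := by
          have := (hasDerivAt_id d').sub ((hasDerivAt_pow 2 d').const_mul q)
          refine this.congr_deriv ?_
          simp
        have := ((e2.sub e3).const_mul ((1 - m ^ 2) * (1 + τ))).sub (e4.const_mul (16 + 8 * B))
        refine this.congr_deriv ?_
        rw [hρdef]; ring
      · have e2 := (h2 _ hx τ hτ).comp d (a1 d)
        have e3 := (h2 _ hy τ hτ).comp d (a2 d)
        have e4 : HasDerivAt (fun d' : ℝ => 1 - 2 * q * d') (-(2 * q)) d := by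
          have := ((hasDerivAt_id d).const_mul (2 * q)).const_sub 1
          simpa using this
        have := (((e2.add e3).div_const 2).const_mul ρ).sub (e4.const_mul (16 + 8 * B))
        refine this.congr_deriv ?_
        ring
    have st_t : 0 ≤ ρ * (vt (m + d / 2) τ - vt (m - d / 2) τ)
        + (1 - m ^ 2) * (v (m + d / 2) τ - v (m - d / 2) τ) := by
      have hl : ∀ᶠ τ' in 𝓝[<] τ, Φ m d τ' ≤ Φ m d τ := by
        filter_upwards [Ioo_mem_nhdsLT hτ0] with τ' hτ'
        exact hmx m hm d hd τ' ⟨hτ'.1.le, hτ'.2.le.trans hτ.2⟩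
      refine deriv_nonneg_of_left_max hl ?_
      have e1 : HasDerivAt (fun τ' : ℝ => (1 - m ^ 2) * (1 + τ')) ((1 - m ^ 2) * 1) τ :=
        ((hasDerivAt_id τ).const_add 1).const_mul _
      have := (e1.mul ((h3 _ hx τ hτ).sub (h3 _ hy τ hτ))).sub_const
        ((16 + 8 * B) * (d - q * d ^ 2))
      refine this.congr_deriv ?_
      rw [hρdef]; simp only [Pi.sub_apply]; ring
    refine doubling_contradiction hB (hpos _ hx τ hτ) (hle _ hx τ hτ) (hpos _ hy τ hτ)
      (hle _ hy τ hτ) hW hρ hρ1 (ρm := -(2 * m) * (1 + τ)) (ρt := 1 - m ^ 2) ?_ (by linarith [sq_nonneg m])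
      (p := 1 - 2 * q * d) ?_ ?_ st_m (by linarith [st_d.1]) (by linarith [st_d.2]) st_t
      (heq _ hx τ hτ) (heq _ hy τ hτ)
    · rw [abs_mul, abs_neg, abs_mul, abs_two, abs_of_nonneg (by linarith : 0 ≤ 1 + τ)]
      have : |m| ≤ 1 := abs_le.2 ⟨hm.1, hm.2⟩
      nlinarith only [this, abs_nonneg m, hτ.2, hτ0]
    · have := mul_le_mul_of_nonneg_left hdD.le (by linarith : 0 ≤ q)
      linarith
    · have : 0 < q * d := by positivity
      linarith
  -- symmetric difference quotients at the centre
  have h00 := h1 0 ⟨by norm_num, by norm_num⟩ 0 ⟨by norm_num, le_refl _⟩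
  have hlim : Tendsto (fun d : ℝ => d⁻¹ * (v (d / 2) 0 - v (-(d / 2)) 0)) (𝓝[>] 0)
      (𝓝 (vz 0 0)) := by
    have e1 : HasDerivAt (fun d : ℝ => v (d / 2) 0 - v (-(d / 2)) 0) (vz 0 0) 0 := by
      have a1 : HasDerivAt (fun d : ℝ => d / 2) (1 / 2) 0 := (hasDerivAt_id _).div_const 2
      have b1 : HasDerivAt (fun y => v y 0) (vz 0 0) ((fun d : ℝ => d / 2) 0) := by simpa using h00
      have b2 : HasDerivAt (fun y => v y 0) (vz 0 0) ((fun d : ℝ => -(d / 2)) 0) := by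
        simpa using h00
      have := (b1.comp (0:ℝ) a1).sub (b2.comp (0:ℝ) a1.neg)
      refine this.congr_deriv ?_
      ring
    have := e1.tendsto_slope_zero_right
    simpa using this
  refine le_of_tendsto hlim ?_
  filter_upwards [Ioo_mem_nhdsGT hD0] with d hd
  have := key 0 ⟨by norm_num, by norm_num⟩ d ⟨hd.1.le, hd.2.le⟩ 0 ⟨by norm_num, le_refl _⟩
  simp only [Φ] at this
  norm_num at this
  have hd0 : 0 < d := hd.1
  rw [inv_mul_le_iff₀ hd0]
  nlinarith [mul_nonneg (by linarith : 0 ≤ 16 + 8 * B) (by positivity : 0 ≤ q * d ^ 2)]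

lemma unit_gradient {B : ℝ} (hB : 0 ≤ B) {v vz vzz vt : ℝ → ℝ → ℝ}
    (hc : ContinuousOn (fun p : ℝ × ℝ => v p.1 p.2) (Icc (-2) 2 ×ˢ Icc (-1) 0))
    (h1 : ∀ z ∈ Icc (-2:ℝ) 2, ∀ τ ∈ Icc (-1:ℝ) 0, HasDerivAt (fun y => v y τ) (vz z τ) z)
    (h2 : ∀ z ∈ Icc (-2:ℝ) 2, ∀ τ ∈ Icc (-1:ℝ) 0, HasDerivAt (fun y => vz y τ) (vzz z τ) z)
    (h3 : ∀ z ∈ Icc (-2:ℝ) 2, ∀ τ ∈ Icc (-1:ℝ) 0, HasDerivAt (fun s => v z s) (vt z τ) τ)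
    (hpos : ∀ z ∈ Icc (-2:ℝ) 2, ∀ τ ∈ Icc (-1:ℝ) 0, 0 < v z τ)
    (hle : ∀ z ∈ Icc (-2:ℝ) 2, ∀ τ ∈ Icc (-1:ℝ) 0, v z τ ≤ 1 / 2)
    (heq : ∀ z ∈ Icc (-2:ℝ) 2, ∀ τ ∈ Icc (-1:ℝ) 0,
      |vt z τ - vzz z τ - (1 / v z τ ^ 2 - 2 / v z τ) * vz z τ ^ 2|
        ≤ B * |vz z τ| + B * v z τ ^ 2) :
    |vz 0 0| ≤ 16 + 8 * B := by
  have hn : ∀ z ∈ Icc (-2:ℝ) 2, -z ∈ Icc (-2:ℝ) 2 := fun z hz =>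
    ⟨by linarith [hz.2], by linarith [hz.1]⟩
  refine abs_le'.2 ⟨unit_one_sided_gradient hB hc h1 h2 h3 hpos hle heq, ?_⟩
  have := unit_one_sided_gradient hB (v := fun z τ => v (-z) τ) (vz := fun z τ => -vz (-z) τ)
    (vzz := fun z τ => vzz (-z) τ) (vt := fun z τ => vt (-z) τ) ?_ ?_ ?_ ?_ ?_ ?_ ?_
  · simpa using this
  · exact hc.comp (f := fun p : ℝ × ℝ => (-p.1, p.2)) (by fun_prop)
      fun p hp => ⟨hn _ hp.1, hp.2⟩
  · intro z hz τ hτ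
    have := (h1 _ (hn z hz) τ hτ).comp z (hasDerivAt_neg z)
    exact this.congr_deriv (by ring)
  · intro z hz τ hτ
    have := ((h2 _ (hn z hz) τ hτ).comp z (hasDerivAt_neg z)).neg
    exact this.congr_deriv (by ring)
  · intro z hz τ hτ
    exact h3 _ (hn z hz) τ hτ
  · intro z hz τ hτ
    exact hpos _ (hn z hz) τ hτ
  · intro z hz τ hτ
    exact hle _ (hn z hz) τ hτ
  · intro z hz τ hτ
    simpa using heq _ (hn z hz) τ hτ

/-- Scale-invariant logarithmic gradient estimate for positive bounded solutions of a
one-dimensional heat inequality with lower order terms, on a parabolic cylinder of size `l`.  It is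
`unit_gradient` for `v = 1 / (2 + log (M / u))` in rescaled variables. -/
lemma log_gradient_estimate {B : ℝ} (hB : 0 ≤ B) {u uy uyy ut : ℝ → ℝ → ℝ} {y₀ t₀ l M : ℝ}
    (hl : 0 < l)
    (hc : ContinuousOn (fun p : ℝ × ℝ => u p.1 p.2)
      (Icc (y₀ - 2 * l) (y₀ + 2 * l) ×ˢ Icc (t₀ - l ^ 2) t₀))
    (h1 : ∀ y ∈ Icc (y₀ - 2 * l) (y₀ + 2 * l), ∀ t ∈ Icc (t₀ - l ^ 2) t₀,
      HasDerivAt (fun z => u z t) (uy y t) y)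
    (h2 : ∀ y ∈ Icc (y₀ - 2 * l) (y₀ + 2 * l), ∀ t ∈ Icc (t₀ - l ^ 2) t₀,
      HasDerivAt (fun z => uy z t) (uyy y t) y)
    (h3 : ∀ y ∈ Icc (y₀ - 2 * l) (y₀ + 2 * l), ∀ t ∈ Icc (t₀ - l ^ 2) t₀,
      HasDerivAt (fun s => u y s) (ut y t) t)
    (hpos : ∀ y ∈ Icc (y₀ - 2 * l) (y₀ + 2 * l), ∀ t ∈ Icc (t₀ - l ^ 2) t₀, 0 < u y t)
    (hle : ∀ y ∈ Icc (y₀ - 2 * l) (y₀ + 2 * l), ∀ t ∈ Icc (t₀ - l ^ 2) t₀, u y t ≤ M)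
    (heq : ∀ y ∈ Icc (y₀ - 2 * l) (y₀ + 2 * l), ∀ t ∈ Icc (t₀ - l ^ 2) t₀,
      l ^ 2 * |ut y t - uyy y t| ≤ B * (l * |uy y t|) + B * u y t) :
    l * |uy y₀ t₀| ≤ (16 + 8 * B) * (u y₀ t₀ * (2 + (log M - log (u y₀ t₀))) ^ 2) := by
  have hY : ∀ z ∈ Icc (-2:ℝ) 2, y₀ + l * z ∈ Icc (y₀ - 2 * l) (y₀ + 2 * l) := fun z hz =>
    ⟨by nlinarith [hz.1], by nlinarith [hz.2]⟩
  have hT : ∀ τ ∈ Icc (-1:ℝ) 0, t₀ + l ^ 2 * τ ∈ Icc (t₀ - l ^ 2) t₀ := fun τ hτ =>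
    ⟨by nlinarith [hτ.1, sq_nonneg l], by nlinarith [hτ.2, sq_nonneg l]⟩
  let U : ℝ → ℝ → ℝ := fun z τ => u (y₀ + l * z) (t₀ + l ^ 2 * τ)
  let Q : ℝ → ℝ → ℝ := fun z τ => 2 + (log M - log (U z τ))
  have hUpos : ∀ z ∈ Icc (-2:ℝ) 2, ∀ τ ∈ Icc (-1:ℝ) 0, 0 < U z τ := fun z hz τ hτ =>
    hpos _ (hY z hz) _ (hT τ hτ)
  have hQ2 : ∀ z ∈ Icc (-2:ℝ) 2, ∀ τ ∈ Icc (-1:ℝ) 0, 2 ≤ Q z τ := by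
    intro z hz τ hτ
    have := log_le_log (hUpos z hz τ hτ) (hle _ (hY z hz) _ (hT τ hτ))
    simp only [Q]; linarith
  have hUz : ∀ z ∈ Icc (-2:ℝ) 2, ∀ τ ∈ Icc (-1:ℝ) 0, HasDerivAt (fun w => U w τ)
      (l * uy (y₀ + l * z) (t₀ + l ^ 2 * τ)) z := by
    intro z hz τ hτ
    have a : HasDerivAt (fun w : ℝ => y₀ + l * w) (l * 1) z :=
      ((hasDerivAt_id z).const_mul l).const_add y₀
    have := (h1 _ (hY z hz) _ (hT τ hτ)).comp z a
    exact this.congr_deriv (by ring)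
  have hQz : ∀ z ∈ Icc (-2:ℝ) 2, ∀ τ ∈ Icc (-1:ℝ) 0, HasDerivAt (fun w => Q w τ)
      (-(l * uy (y₀ + l * z) (t₀ + l ^ 2 * τ) / U z τ)) z := by
    intro z hz τ hτ
    exact ((((hUz z hz τ hτ).log (hUpos z hz τ hτ).ne').const_sub (log M)).const_add 2)
  have key := unit_gradient hB (v := fun z τ => (Q z τ)⁻¹)
    (vz := fun z τ => l * uy (y₀ + l * z) (t₀ + l ^ 2 * τ) / (U z τ * Q z τ ^ 2))
    (vzz := fun z τ => l ^ 2 * uyy (y₀ + l * z) (t₀ + l ^ 2 * τ) / (U z τ * Q z τ ^ 2)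
      - (l * uy (y₀ + l * z) (t₀ + l ^ 2 * τ)) ^ 2 * (Q z τ ^ 2 - 2 * Q z τ)
        / (U z τ ^ 2 * Q z τ ^ 4))
    (vt := fun z τ => l ^ 2 * ut (y₀ + l * z) (t₀ + l ^ 2 * τ) / (U z τ * Q z τ ^ 2))
    ?_ ?_ ?_ ?_ ?_ ?_ ?_
  · have z0 : (0:ℝ) ∈ Icc (-2:ℝ) 2 := ⟨by norm_num, by norm_num⟩
    have t0 : (0:ℝ) ∈ Icc (-1:ℝ) 0 := ⟨by norm_num, le_refl _⟩
    have hU0 := hUpos 0 z0 0 t0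
    have hQ0 := hQ2 0 z0 0 t0
    have hden : 0 < U 0 0 * Q 0 0 ^ 2 := by positivity
    rw [abs_div, abs_of_pos hden, div_le_iff₀ hden, abs_mul, abs_of_pos hl] at key
    simpa [U, Q] using key
  · have cU : ContinuousOn (fun p : ℝ × ℝ => U p.1 p.2) (Icc (-2) 2 ×ˢ Icc (-1) 0) :=
      hc.comp (f := fun p : ℝ × ℝ => (y₀ + l * p.1, t₀ + l ^ 2 * p.2)) (by fun_prop)
        fun p hp => ⟨hY _ hp.1, hT _ hp.2⟩
    have cQ : ContinuousOn (fun p : ℝ × ℝ => Q p.1 p.2) (Icc (-2) 2 ×ˢ Icc (-1) 0) :=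
      continuousOn_const.add
        (continuousOn_const.sub (cU.log fun p hp => (hUpos _ hp.1 _ hp.2).ne'))
    exact cQ.inv₀ fun p hp => by have := hQ2 _ hp.1 _ hp.2; positivity
  · intro z hz τ hτ
    have hQ := hQ2 z hz τ hτ
    have hU := hUpos z hz τ hτ
    have hQ0 : Q z τ ≠ 0 := by positivity
    refine ((hQz z hz τ hτ).inv hQ0).congr_deriv ?_
    field_simp
  · intro z hz τ hτ
    have hQ := hQ2 z hz τ hτ
    have hU := hUpos z hz τ hτ
    have hQ0 : Q z τ ≠ 0 := by positivity
    have a : HasDerivAt (fun w : ℝ => y₀ + l * w) (l * 1) z :=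
      ((hasDerivAt_id z).const_mul l).const_add y₀
    have e1 := ((h2 _ (hY z hz) _ (hT τ hτ)).comp z a).const_mul l
    have e2 := (hUz z hz τ hτ).mul ((hQz z hz τ hτ).pow 2)
    have := e1.div e2 (by simp; exact ⟨hU.ne', hQ0⟩)
    refine this.congr_deriv ?_
    simp only [Pi.mul_apply, Pi.pow_apply, Function.comp]
    field_simp
    ring
  · intro z hz τ hτ
    have hQ := hQ2 z hz τ hτ
    have hU := hUpos z hz τ hτ
    have hQ0 : Q z τ ≠ 0 := by positivity
    have a : HasDerivAt (fun s : ℝ => t₀ + l ^ 2 * s) (l ^ 2 * 1) τ :=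
      ((hasDerivAt_id τ).const_mul (l ^ 2)).const_add t₀
    have e1 := (h3 _ (hY z hz) _ (hT τ hτ)).comp τ a
    have e2 : HasDerivAt (fun s => U z s) _ τ := e1
    have e3 : HasDerivAt (fun s => Q z s) _ τ := ((e2.log hU.ne').const_sub (log M)).const_add 2
    refine (e3.inv hQ0).congr_deriv ?_
    field_simp
  · intro z hz τ hτ
    have hQ := hQ2 z hz τ hτ
    positivity
  · intro z hz τ hτ
    have hQ := hQ2 z hz τ hτ
    rw [one_div]
    exact inv_anti₀ (by norm_num) hQ
  · intro z hz τ hτ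
    have hQ := hQ2 z hz τ hτ
    have hU := hUpos z hz τ hτ
    have hQ0 : 0 < Q z τ := by positivity
    have he := heq _ (hY z hz) _ (hT τ hτ)
    have hden : 0 < U z τ * Q z τ ^ 2 := by positivity
    have e1 : l ^ 2 * ut (y₀ + l * z) (t₀ + l ^ 2 * τ) / (U z τ * Q z τ ^ 2)
        - (l ^ 2 * uyy (y₀ + l * z) (t₀ + l ^ 2 * τ) / (U z τ * Q z τ ^ 2)
          - (l * uy (y₀ + l * z) (t₀ + l ^ 2 * τ)) ^ 2 * (Q z τ ^ 2 - 2 * Q z τ)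
            / (U z τ ^ 2 * Q z τ ^ 4))
        - (1 / (Q z τ)⁻¹ ^ 2 - 2 / (Q z τ)⁻¹)
          * (l * uy (y₀ + l * z) (t₀ + l ^ 2 * τ) / (U z τ * Q z τ ^ 2)) ^ 2
        = l ^ 2 * (ut (y₀ + l * z) (t₀ + l ^ 2 * τ) - uyy (y₀ + l * z) (t₀ + l ^ 2 * τ))
          / (U z τ * Q z τ ^ 2) := by
      field_simp
      ring
    have e2 : B * |l * uy (y₀ + l * z) (t₀ + l ^ 2 * τ) / (U z τ * Q z τ ^ 2)|
        + B * (Q z τ)⁻¹ ^ 2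
        = (B * (l * |uy (y₀ + l * z) (t₀ + l ^ 2 * τ)|) + B * U z τ) / (U z τ * Q z τ ^ 2) := by
      rw [abs_div, abs_of_pos hden, abs_mul, abs_of_pos hl]
      field_simp
    rw [e1, e2, abs_div, abs_of_pos hden, abs_mul, abs_of_nonneg (sq_nonneg l)]
    exact div_le_div_of_nonneg_right he hden.le

/-! ### The equation in the logarithmic variable, and barriers -/

/-- A bounded nonnegative solution in the logarithmic variable `y = log x`: `g y t = n (exp y) t`,
with its derivatives `gy = ∂_y g`, `gyy = ∂_y² g`, `gt = ∂_t g` carried along as functions. -/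
structure LogSol (g gy gyy gt : ℝ → ℝ → ℝ) (M : ℝ) : Prop where
  cont : ContinuousOn (fun p : ℝ × ℝ => g p.1 p.2) (univ ×ˢ Ioi 0)
  hy : ∀ y t, 0 < t → HasDerivAt (fun z => g z t) (gy y t) y
  hyy : ∀ y t, 0 < t → HasDerivAt (fun z => gy z t) (gyy y t) y
  ht : ∀ y t, 0 < t → HasDerivAt (fun s => g y s) (gt y t) t
  pde : ∀ y t, 0 < t → gt y t = gyy y t + (exp y - 1 + 2 * exp (-y) * g y t) * gy y t
    + (2 * exp y - 2) * g y t
  nonneg : ∀ y t, 0 < t → 0 ≤ g y t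
  le : ∀ y t, 0 < t → g y t ≤ M
  one_le : 1 ≤ M
  decay : ∀ T ε, 0 < T → 0 < ε → ∃ Y, ∀ y, Y ≤ y → ∀ t, 0 < t → t < T → exp (2 * y) * g y t < ε

lemma kompFlux_hasDerivAt {n : ℝ → ℝ → ℝ} {n₀ : ℝ → ℝ} (h : IsKompSol n n₀) {x t : ℝ}
    (hx : 0 < x) (ht : 0 < t) :
    HasDerivAt (kompFlux fun z => n z t)
      (x ^ 2 * deriv (deriv fun z => n z t) x + (x ^ 2 + 2 * n x t) * deriv (fun z => n z t) x
        + (2 * x - 2) * n x t) x := by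
  have d1 := (h.diff_x t ht x hx).hasDerivAt
  have d2 := (h.diff_xx t ht x hx).hasDerivAt
  have e1 := ((hasDerivAt_id x).pow 2).mul d2
  have e2 := (((hasDerivAt_id x).pow 2).sub ((hasDerivAt_id x).const_mul 2)).mul d1
  have := (e1.add e2).add (d1.pow 2)
  refine (this.congr_deriv ?_)
  simp
  ring

lemma IsKompSol.logSol {n : ℝ → ℝ → ℝ} {n₀ : ℝ → ℝ} (h : IsKompSol n n₀) :
    ∃ M, LogSol (fun y t => n (exp y) t) (fun y t => exp y * deriv (fun z => n z t) (exp y))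
      (fun y t => exp y * deriv (fun z => n z t) (exp y)
        + exp y ^ 2 * deriv (deriv fun z => n z t) (exp y))
      (fun y t => deriv (fun s => n (exp y) s) t) M := by
  obtain ⟨M, hM⟩ := h.bounded
  refine ⟨max M 1, ?_, ?_, ?_, ?_, ?_, ?_, ?_, le_max_right _ _, ?_⟩
  · exact h.contOn.comp (f := fun p : ℝ × ℝ => (exp p.1, p.2)) (by fun_prop)
      fun p hp => ⟨exp_pos _, hp.2⟩
  · intro y t ht
    have := (h.diff_x t ht (exp y) (exp_pos y)).hasDerivAt.comp y (Real.hasDerivAt_exp y)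
    exact this.congr_deriv (mul_comm _ _)
  · intro y t ht
    have := (Real.hasDerivAt_exp y).mul
      ((h.diff_xx t ht (exp y) (exp_pos y)).hasDerivAt.comp y (Real.hasDerivAt_exp y))
    refine this.congr_deriv ?_
    simp only [Function.comp]
    ring
  · intro y t ht
    exact (h.diff_t (exp y) (exp_pos y) t ht).hasDerivAt
  · intro y t ht
    have hp := h.pde (exp y) (exp_pos y) t ht
    rw [hp, (kompFlux_hasDerivAt h (exp_pos y) ht).deriv, Real.exp_neg]
    have := exp_pos y
    field_simp
    ring
  · exact fun y t ht => h.nonneg _ t (exp_pos y) ht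
  · exact fun y t ht => (hM _ t (exp_pos y) ht).trans (le_max_left _ _)
  · intro T ε hT hε
    obtain ⟨R, hR, hdec⟩ := h.decay T hT ε hε
    refine ⟨log R, fun y hy t ht htT => ?_⟩
    have := hdec (exp y) ((Real.log_le_iff_le_exp hR).1 hy) t ht.le htT
    rwa [← Real.exp_nat_mul] at this

namespace LogSol

variable {g gy gyy gt : ℝ → ℝ → ℝ} {M : ℝ}

/-- Comparison from below.  At each point of `K` where `g < s`, which in particular must be off the
parabolic boundary, `s` has to be a strict subsolution of the equation with drift and zero-order
term evaluated at `g`; then there is no such point. -/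
lemma sub_barrier (S : LogSol g gy gyy gt M) {K : Set (ℝ × ℝ)} (hK : IsCompact K)
    (hK0 : ∀ y t, (y, t) ∈ K → 0 < t) {s : ℝ → ℝ → ℝ}
    (hs : ContinuousOn (fun p : ℝ × ℝ => s p.1 p.2) K)
    (h : ∀ y t, (y, t) ∈ K → g y t < s y t →
      (∀ᶠ y' in 𝓝 y, (y', t) ∈ K) ∧ (∀ᶠ t' in 𝓝[<] t, (y, t') ∈ K) ∧
      ∃ (sy : ℝ → ℝ) (syy st : ℝ), (∀ᶠ y' in 𝓝 y, HasDerivAt (fun z => s z t) (sy y') y') ∧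
        HasDerivAt sy syy y ∧ HasDerivAt (fun τ => s y τ) st t ∧
        st < syy + (exp y - 1 + 2 * exp (-y) * g y t) * sy y + (2 * exp y - 2) * g y t) :
    ∀ y t, (y, t) ∈ K → s y t ≤ g y t := by
  have key := parabolic_max_principle hK (w := fun y t => s y t - g y t)
    (hs.sub (S.cont.mono fun p hp => ⟨trivial, hK0 p.1 p.2 hp⟩)) ?_
  · exact fun y t hyt => sub_nonpos.1 (key y t hyt)
  intro y t hyt hpos
  have ht := hK0 y t hyt
  obtain ⟨a, b, sy, syy, st, d1, d2, d3, d4⟩ := h y t hyt (sub_pos.1 hpos)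
  refine ⟨a, b, fun y' => sy y' - gy y' t, syy - gyy y t, st - gt y t, ?_,
    d2.sub (S.hyy y t ht), d3.sub (S.ht y t ht), ?_⟩
  · filter_upwards [d1] with y' hy' using hy'.sub (S.hy y' t ht)
  · intro e1 e2 e3
    have e1' : sy y = gy y t := sub_eq_zero.1 e1
    rw [e1'] at d4
    linarith [S.pde y t ht]

/-- A positive strict supersolution of the linear equation obtained by freezing the drift at `g`
lies above `g`, provided it does so on the parabolic boundary of `K`.  The coefficient
`2 * exp y - 2` is not nonpositive, so the maximum of the ratio `g / s` is used instead of that of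
the difference. -/
lemma super_barrier (S : LogSol g gy gyy gt M) {K : Set (ℝ × ℝ)} (hK : IsCompact K)
    (hK0 : ∀ y t, (y, t) ∈ K → 0 < t) {s : ℝ → ℝ → ℝ}
    (hs : ContinuousOn (fun p : ℝ × ℝ => s p.1 p.2) K) (hs0 : ∀ y t, (y, t) ∈ K → 0 < s y t)
    (h : ∀ y t, (y, t) ∈ K → s y t < g y t →
      (∀ᶠ y' in 𝓝 y, (y', t) ∈ K) ∧ (∀ᶠ t' in 𝓝[<] t, (y, t') ∈ K) ∧
      ∃ (sy : ℝ → ℝ) (syy st : ℝ), (∀ᶠ y' in 𝓝 y, HasDerivAt (fun z => s z t) (sy y') y') ∧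
        HasDerivAt sy syy y ∧ HasDerivAt (fun τ => s y τ) st t ∧
        syy + (exp y - 1 + 2 * exp (-y) * g y t) * sy y + (2 * exp y - 2) * s y t < st) :
    ∀ y t, (y, t) ∈ K → g y t ≤ s y t := by
  intro y₁ t₁ h₁
  obtain ⟨⟨y, t⟩, hyt, hmax⟩ := hK.exists_isMaxOn ⟨_, h₁⟩
    ((S.cont.mono fun p hp => ⟨trivial, hK0 p.1 p.2 hp⟩).div hs fun p hp => (hs0 p.1 p.2 hp).ne')
  have hmax' : ∀ p ∈ K, g p.1 p.2 / s p.1 p.2 ≤ g y t / s y t := fun p hp => hmax hp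
  by_contra hcon
  push Not at hcon
  have hst := hs0 y t hyt
  set r := g y t / s y t with hr
  have hr1 : 1 < r := by
    have := hmax' _ h₁
    exact lt_of_lt_of_le ((one_lt_div (hs0 _ _ h₁)).2 hcon) this
  have hgr : g y t = r * s y t := by rw [hr]; field_simp
  have hle : ∀ p ∈ K, g p.1 p.2 - r * s p.1 p.2 ≤ g y t - r * s y t := by
    intro p hp
    have := (div_le_iff₀ (hs0 p.1 p.2 hp)).1 (hmax' p hp)
    linarith
  have ht := hK0 y t hyt
  obtain ⟨a, b, sy, syy, st, d1, d2, d3, d4⟩ := h y t hyt (by nlinarith)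
  have m1 := localMax_deriv_test (f := fun z => g z t - r * s z t)
    (f' := fun z => gy z t - r * sy z) (c := gyy y t - r * syy) (a := y)
    (by filter_upwards [a] with y' hy' using hle _ hy')
    (by filter_upwards [d1] with y' hy' using (S.hy y' t ht).sub (hy'.const_mul r))
    ((S.hyy y t ht).sub (d2.const_mul r))
  have m2 := deriv_nonneg_of_left_max (f := fun τ => g y τ - r * s y τ)
    (by filter_upwards [b] with t' ht' using hle _ ht')
    ((S.ht y t ht).sub (d3.const_mul r))
  have e1 : gy y t = r * sy y := by linarith [m1.1]
  have hp := S.pde y t ht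
  have h3 := mul_lt_mul_of_pos_left d4 (by linarith : 0 < r)
  rw [e1] at hp
  have h4 : (2 * exp y - 2) * g y t = r * ((2 * exp y - 2) * s y t) := by rw [hgr]; ring
  rw [h4] at hp
  linarith [m1.2]

end LogSol

/-! ### The strong maximum principle -/

lemma eventually_mem_rect {a b c d y t : ℝ} (hy : y ∈ Ioo a b) (ht : t ∈ Ioc c d) :
    (∀ᶠ y' in 𝓝 y, (y', t) ∈ Icc a b ×ˢ Icc c d) ∧
    (∀ᶠ t' in 𝓝[<] t, (y, t') ∈ Icc a b ×ˢ Icc c d) := by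
  constructor
  · filter_upwards [Icc_mem_nhds hy.1 hy.2] with y' hy'
    exact ⟨hy', ht.1.le, ht.2⟩
  · filter_upwards [Ico_mem_nhdsLT ht.1] with t' ht'
    exact ⟨⟨hy.1.le, hy.2.le⟩, ht'.1, ht'.2.le.trans ht.2⟩

/-- The algebraic inequality behind the bump subsolution: `ρ` is the distance to the centre of the
tube, `b` the drift and `σ` the velocity of the centre. -/
lemma bump_subsolution {r ρ b σ B P Λ : ℝ} (hr : 0 < r) (hr1 : r ≤ 1) (hρ : |ρ| ≤ r)
    (hb : |b| ≤ B) (hP : P = 12 + 4 * |σ| + 4 * B) (hΛ : Λ = 2 + P ^ 2 / (8 * r ^ 2)) :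
    -Λ * (r ^ 2 - ρ ^ 2) ^ 2 + 4 * σ * ρ * (r ^ 2 - ρ ^ 2)
      < (12 * ρ ^ 2 - 4 * r ^ 2) + b * (-4 * ρ * (r ^ 2 - ρ ^ 2))
        - 2 * (r ^ 2 - ρ ^ 2) ^ 2 := by
  set a := r ^ 2 - ρ ^ 2 with ha
  have ha0 : 0 ≤ a := by
    have := sq_le_sq' (by linarith [abs_le.1 hρ |>.1]) (abs_le.1 hρ).2
    linarith
  have hρ2 : ρ ^ 2 = r ^ 2 - a := by rw [ha]; ring
  have h1 : |(σ + b) * ρ| ≤ |σ| + B := by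
    rw [abs_mul]
    have e1 : |σ + b| ≤ |σ| + B := (abs_add_le _ _).trans (by linarith)
    calc |σ + b| * |ρ| ≤ (|σ| + B) * 1 :=
          mul_le_mul e1 (hρ.trans hr1) (abs_nonneg _) ((abs_nonneg _).trans e1)
      _ = _ := mul_one _
  have h2 := mul_le_mul_of_nonneg_right ((le_abs_self _).trans h1) ha0
  have h3 : 0 < 8 * r ^ 2 - P * a + P ^ 2 / (8 * r ^ 2) * a ^ 2 := by
    have : 8 * r ^ 2 - P * a + P ^ 2 / (8 * r ^ 2) * a ^ 2
        = ((8 * r ^ 2 - P * a / 2) ^ 2 + 3 / 4 * (P * a) ^ 2) / (8 * r ^ 2) := by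
      field_simp
      ring
    rw [this]
    apply div_pos _ (by positivity)
    rcases eq_or_ne (P * a) 0 with h | h
    · rw [h]; norm_num; positivity
    · positivity
  rw [hρ2, hΛ]
  rw [hP] at h3 ⊢
  nlinarith only [h2, h3]

namespace LogSol

variable {g gy gyy gt : ℝ → ℝ → ℝ} {M : ℝ}

lemma abs_drift_le (S : LogSol g gy gyy gt M) {y t Y : ℝ} (ht : 0 < t) (hY : |y| ≤ Y) :
    |exp y - 1 + 2 * exp (-y) * g y t| ≤ (2 + 2 * M) * exp Y := by
  have hg := S.nonneg y t ht
  have hgM := S.le y t ht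
  have hM := S.one_le
  have e1 : exp y ≤ exp Y := exp_le_exp.2 ((le_abs_self _).trans hY)
  have e2 : exp (-y) ≤ exp Y := exp_le_exp.2 ((neg_le_abs _).trans hY)
  have e3 : 1 ≤ exp Y := one_le_exp ((abs_nonneg y).trans hY)
  have p1 := exp_pos y
  have p2 := exp_pos (-y)
  have e4 : exp (-y) * g y t ≤ exp Y * M := mul_le_mul e2 hgM hg (exp_pos _).le
  have e5 : 0 ≤ exp (-y) * g y t := by positivity
  have e6 : 0 ≤ M * exp Y := by positivity
  rw [abs_le]
  constructor <;> nlinarith only [e1, e2, e3, p1, p2, e4, e5, e6]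

/-- Positivity propagates instantly: compare with a bump carried along the segment joining the
two space-time points. -/
lemma pos_of_pos (S : LogSol g gy gyy gt M) {y₀ t₀ y₁ t₁ : ℝ} (ht₀ : 0 < t₀) (h01 : t₀ < t₁)
    (hpos : 0 < g y₀ t₀) : 0 < g y₁ t₁ := by
  -- a radius `r` such that `g (·, t₀)` is at least half its value at `y₀` on `[y₀ - r, y₀ + r]`
  obtain ⟨r, hr, hr1, hgr⟩ : ∃ r, 0 < r ∧ r ≤ 1 ∧ ∀ y, |y - y₀| ≤ r → g y₀ t₀ / 2 < g y t₀ := by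
    have hc := (S.hy y₀ t₀ ht₀).continuousAt
    have := hc.eventually (lt_mem_nhds (half_lt_self hpos))
    obtain ⟨r, hr, h⟩ := Metric.eventually_nhds_iff.1 this
    refine ⟨min (r / 2) 1, by positivity, min_le_right _ _, fun y hy => h ?_⟩
    rw [Real.dist_eq]
    have := hy.trans (min_le_left _ _)
    linarith
  set σ := (y₁ - y₀) / (t₁ - t₀) with hσ
  set Y := |y₀| + |y₁ - y₀| + 1 with hY
  set B := (2 + 2 * M) * exp Y with hB
  obtain ⟨P, hP⟩ : ∃ P, P = 12 + 4 * |σ| + 4 * B := ⟨_, rfl⟩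
  obtain ⟨Λ, hΛ⟩ : ∃ Λ, Λ = 2 + P ^ 2 / (8 * r ^ 2) := ⟨_, rfl⟩
  set ε := g y₀ t₀ / 2 with hε
  have hε0 : 0 < ε := by positivity
  let c : ℝ → ℝ := fun t => y₀ + σ * (t - t₀)
  have hc1 : c t₁ = y₁ := by
    have : t₁ - t₀ ≠ 0 := by linarith
    simp only [c, hσ]; field_simp; ring
  have hσt : ∀ t ∈ Icc t₀ t₁, |σ * (t - t₀)| ≤ |y₁ - y₀| := by
    intro t ht
    have h1 : 0 < t₁ - t₀ := by linarith
    rw [hσ, abs_mul, abs_div, abs_of_pos h1, abs_of_nonneg (by linarith [ht.1] : 0 ≤ t - t₀),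
      div_mul_eq_mul_div, div_le_iff₀ h1]
    exact mul_le_mul_of_nonneg_left (by linarith [ht.2]) (abs_nonneg _)
  let K : Set (ℝ × ℝ) := {p | p.2 ∈ Icc t₀ t₁ ∧ |p.1 - c p.2| ≤ r}
  have hKY : ∀ y t, (y, t) ∈ K → |y| ≤ Y := by
    intro y t hyt
    have h1 := hσt t hyt.1
    have h2 : |y - (y₀ + σ * (t - t₀))| ≤ r := hyt.2
    calc |y| = |y₀ + σ * (t - t₀) + (y - (y₀ + σ * (t - t₀)))| := by congr 1; ring
      _ ≤ |y₀| + |σ * (t - t₀)| + |y - (y₀ + σ * (t - t₀))| := abs_add_three _ _ _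
      _ ≤ Y := by linarith
  have hKc : IsCompact K := by
    refine (isCompact_Icc.prod isCompact_Icc :
      IsCompact (Icc (-Y) Y ×ˢ Icc t₀ t₁)).of_isClosed_subset ?_ ?_
    · refine IsClosed.inter (isClosed_Icc.preimage continuous_snd) ?_
      exact isClosed_le (f := fun p : ℝ × ℝ => |p.1 - c p.2|) (by simp only [c]; fun_prop)
        continuous_const
    · rintro ⟨y, t⟩ hp
      exact ⟨abs_le.1 (hKY y t hp), hp.1⟩
  let s : ℝ → ℝ → ℝ := fun y t => ε * exp (-Λ * (t - t₀)) * (r ^ 2 - (y - c t) ^ 2) ^ 2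
  have key := S.sub_barrier hKc (fun y t h => lt_of_lt_of_le ht₀ h.1.1) (s := s)
    (by simp only [s, c]; fun_prop) ?_ y₁ t₁ ⟨⟨h01.le, le_refl _⟩, by simp [hc1, hr.le]⟩
  · have : 0 < s y₁ t₁ := by
      simp only [s, hc1, sub_self, ne_eq, OfNat.ofNat_ne_zero, not_false_eq_true, zero_pow, sub_zero]
      positivity
    linarith
  intro y t hyt hlt
  have ht : 0 < t := lt_of_lt_of_le ht₀ hyt.1.1
  have hg0 := S.nonneg y t ht
  have hρ : |y - c t| ≤ r := hyt.2
  have hρ' : |y - c t| < r := by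
    refine lt_of_le_of_ne hρ fun h => ?_
    have h2 : (y - c t) ^ 2 = r ^ 2 := by rw [← sq_abs, h]
    have : s y t = 0 := by simp [s, h2]
    linarith
  have ht' : t₀ < t := by
    refine lt_of_le_of_ne hyt.1.1 fun h => ?_
    subst h
    have hc0 : c t₀ = y₀ := by simp [c]
    have h1 : s y t₀ ≤ ε := by
      simp only [s, sub_self, mul_zero, exp_zero, mul_one]
      rw [hc0] at hρ ⊢
      have h3 : (y - y₀) ^ 2 ≤ r ^ 2 := by rw [← sq_abs (y - y₀)]; gcongr
      have h4 : (r ^ 2 - (y - y₀) ^ 2) ^ 2 ≤ 1 := by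
        apply pow_le_one₀ (by linarith)
        nlinarith [sq_nonneg (y - y₀)]
      nlinarith
    have := hgr y (by rwa [hc0] at hρ)
    linarith
  refine ⟨?_, ?_, fun z => ε * exp (-Λ * (t - t₀)) * (-4 * (z - c t) * (r ^ 2 - (z - c t) ^ 2)),
    ε * exp (-Λ * (t - t₀)) * (12 * (y - c t) ^ 2 - 4 * r ^ 2),
    ε * exp (-Λ * (t - t₀)) * (-Λ * (r ^ 2 - (y - c t) ^ 2) ^ 2
      + 4 * σ * (y - c t) * (r ^ 2 - (y - c t) ^ 2)), ?_, ?_, ?_, ?_⟩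
  · have : ContinuousAt (fun y' => |y' - c t|) y := by fun_prop
    filter_upwards [this.eventually (gt_mem_nhds hρ')] with y' hy'
    exact ⟨hyt.1, hy'.le⟩
  · have : ContinuousAt (fun t' => |y - c t'|) t := by simp only [c]; fun_prop
    filter_upwards [nhdsWithin_le_nhds (this.eventually (gt_mem_nhds hρ')),
      Ico_mem_nhdsLT ht'] with t' h1 h2
    exact ⟨⟨h2.1, h2.2.le.trans hyt.1.2⟩, h1.le⟩
  · refine Eventually.of_forall fun z => ?_
    have := (((((hasDerivAt_id z).sub_const (c t)).pow 2).const_sub (r ^ 2)).pow 2).const_mul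
      (ε * exp (-Λ * (t - t₀)))
    refine this.congr_deriv ?_
    simp
    left
    ring
  · have := ((((hasDerivAt_id y).sub_const (c t)).const_mul (-4)).mul
      ((((hasDerivAt_id y).sub_const (c t)).pow 2).const_sub (r ^ 2))).const_mul
      (ε * exp (-Λ * (t - t₀)))
    refine this.congr_deriv ?_
    simp
    left
    ring
  · have e0 : HasDerivAt c σ t := by
      have := (((hasDerivAt_id t).sub_const t₀).const_mul σ).const_add y₀
      exact this.congr_deriv (mul_one _)
    have e1 := ((((hasDerivAt_id t).sub_const t₀).const_mul (-Λ)).exp).const_mul ε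
    have e2 := (((e0.const_sub y).pow 2).const_sub (r ^ 2)).pow 2
    refine (e1.mul e2).congr_deriv ?_
    simp
    ring
  · have hb := bump_subsolution hr hr1 hρ (S.abs_drift_le ht (hKY y t hyt)) hP hΛ (σ := σ)
    have hE : 0 < ε * exp (-Λ * (t - t₀)) := by positivity
    have hm := mul_lt_mul_of_pos_left hb hE
    have hcg : -2 * s y t ≤ (2 * exp y - 2) * g y t := by
      have : 0 ≤ exp y * g y t := mul_nonneg (exp_pos y).le hg0
      linarith
    simp only [s] at hcg
    linarith only [hm, hcg]

/-- A solution that vanishes identically at a positive time stays zero: compare with the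
supersolutions `ε exp (-2 y + 5 (t - t₀))`, that is `ε x⁻² exp (5 (t - t₀))`, and let `ε → 0`. -/
lemma zero_of_zero (S : LogSol g gy gyy gt M) {t₀ : ℝ} (ht₀ : 0 < t₀) (h0 : ∀ y, g y t₀ = 0)
    {y t : ℝ} (h : t₀ ≤ t) : g y t = 0 := by
  refine le_antisymm ?_ (S.nonneg y t (ht₀.trans_le h))
  have key : ∀ ε > 0, g y t ≤ ε * exp (-2 * y + 5 * (t - t₀)) := by
    intro ε hε
    obtain ⟨Y, hY⟩ := S.decay (t + 1) ε (by linarith) hε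
    set Z := max (max Y (|y| + 1)) (M / ε) with hZ
    have hZ1 : |y| < Z := lt_of_lt_of_le (lt_add_one _) ((le_max_right _ _).trans (le_max_left _ _))
    have hZ2 : Y ≤ Z := (le_max_left _ _).trans (le_max_left _ _)
    have hZ3 : M / ε ≤ Z := le_max_right _ _
    have hZ0 : 0 < Z := (abs_nonneg y).trans_lt hZ1
    refine S.super_barrier (isCompact_Icc.prod isCompact_Icc :
      IsCompact (Icc (-Z) Z ×ˢ Icc t₀ t)) (fun y t h => ht₀.trans_le h.2.1)
      (s := fun y t => ε * exp (-2 * y + 5 * (t - t₀))) (by fun_prop)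
      (fun _ _ _ => by positivity) ?_ y t ⟨abs_le.1 hZ1.le, h, le_refl _⟩
    intro z τ hz hlt
    have hτ0 : 0 < τ := ht₀.trans_le hz.2.1
    have hE : 1 ≤ exp (5 * (τ - t₀)) := one_le_exp (by linarith [hz.2.1])
    simp only [exp_add] at hlt
    have hlt' : ε * exp (-2 * z) < g z τ := by
      refine lt_of_le_of_lt ?_ hlt
      have : 0 < ε * exp (-2 * z) := by positivity
      nlinarith
    have hp := exp_pos (-2 * z)
    have hm : exp (2 * z) * exp (-2 * z) = 1 := by rw [← exp_add]; simp
    have a1 : z < Z := by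
      refine lt_of_le_of_ne hz.1.2 fun h => ?_
      have h1 := hY z (by rw [h]; exact hZ2) τ hτ0 (by linarith [hz.2.2])
      have h2 := mul_lt_mul_of_pos_left hlt' (exp_pos (2 * z))
      have : exp (2 * z) * (ε * exp (-2 * z)) = ε := by linear_combination ε * hm
      linarith
    have a2 : -Z < z := by
      refine lt_of_le_of_ne hz.1.1 fun h => ?_
      have h1 : M ≤ ε * Z := by rwa [div_le_iff₀' hε] at hZ3
      have h2 : Z ≤ exp (-2 * z) := by
        rw [← h]
        linarith [add_one_le_exp (-2 * -Z)]
      have h3 := mul_le_mul_of_nonneg_left h2 hε.le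
      linarith [S.le z τ hτ0]
    have a3 : t₀ < τ := by
      refine lt_of_le_of_ne hz.2.1 fun h => ?_
      rw [← h, h0 z] at hlt'
      have : 0 < ε * exp (-2 * z) := by positivity
      linarith
    obtain ⟨b1, b2⟩ := eventually_mem_rect ⟨a2, a1⟩ ⟨a3, hz.2.2⟩
    refine ⟨b1, b2, fun z => -2 * (ε * exp (-2 * z + 5 * (τ - t₀))),
      4 * (ε * exp (-2 * z + 5 * (τ - t₀))), 5 * (ε * exp (-2 * z + 5 * (τ - t₀))), ?_, ?_, ?_, ?_⟩
    · refine Eventually.of_forall fun z => ?_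
      have := ((((hasDerivAt_id z).const_mul (-2)).add_const (5 * (τ - t₀))).exp).const_mul ε
      refine this.congr_deriv ?_
      simp
      ring
    · have := (((((hasDerivAt_id z).const_mul (-2)).add_const
        (5 * (τ - t₀))).exp).const_mul ε).const_mul (-2)
      refine this.congr_deriv ?_
      simp
      ring
    · have := (((((hasDerivAt_id τ).sub_const t₀).const_mul 5).const_add (-2 * z)).exp).const_mul ε
      refine this.congr_deriv ?_
      simp
      ring
    · have hs : 0 < ε * exp (-2 * z + 5 * (τ - t₀)) := by positivity
      have hg := S.nonneg z τ hτ0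
      have h1 : 0 ≤ exp (-z) * g z τ * (ε * exp (-2 * z + 5 * (τ - t₀))) := by positivity
      linarith
  refine le_of_forall_pos_le_add fun δ hδ => ?_
  have := key (δ / exp (-2 * y + 5 * (t - t₀))) (by positivity)
  rwa [div_mul_cancel₀ _ (exp_pos _).ne', ← zero_add δ] at this

/-- Either the solution vanishes identically, or it is everywhere positive. -/
lemma zero_or_pos (S : LogSol g gy gyy gt M) :
    (∀ y t, 0 < t → g y t = 0) ∨ (∀ y t, 0 < t → 0 < g y t) := by
  by_cases h : ∀ y t, 0 < t → 0 < g y t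
  · exact Or.inr h
  left
  push Not at h
  obtain ⟨y₁, t₁, ht₁, hle⟩ := h
  have before : ∀ y t, 0 < t → t < t₁ → g y t = 0 := by
    intro y t ht htt
    by_contra hne
    have := S.pos_of_pos ht htt (lt_of_le_of_ne (S.nonneg y t ht) (Ne.symm hne)) (y₁ := y₁)
    linarith
  intro y t ht
  rcases lt_or_ge t t₁ with h | h
  · exact before y t ht h
  · exact S.zero_of_zero (half_pos ht₁) (fun y => before y _ (half_pos ht₁) (half_lt_self ht₁))
      (by linarith)

end LogSol

/-! ### Decay at infinity and a Gaussian lower bound near zero -/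

namespace LogSol

variable {g gy gyy gt : ℝ → ℝ → ℝ} {M : ℝ}

/-- Decay like `x ^ (-12)`, `x = exp y`, at positive times; this power suffices for all later
purposes.  The supersolution is `(x (t - t₀)) ^ (-12)`, the drift `x` being strong
enough to absorb its time derivative. -/
lemma exp_decay (S : LogSol g gy gyy gt M) {t₁ t₂ : ℝ} (ht₁ : 0 < t₁) (h12 : t₁ ≤ t₂) :
    ∃ A, M ≤ A ∧ ∀ y, ∀ t ∈ Icc t₁ t₂, g y t ≤ A * exp (-12 * y) := by
  obtain ⟨t₀, ht₀, h01⟩ : ∃ t₀, 0 < t₀ ∧ t₀ < t₁ := ⟨t₁ / 2, by linarith, by linarith⟩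
  obtain ⟨κ, hκ⟩ : ∃ κ, κ = 3 + 31 * (t₂ - t₀) := ⟨_, rfl⟩
  have hκ0 : 0 < κ := by linarith
  have hM := S.one_le
  have main : ∀ y, ∀ t ∈ Icc t₁ t₂, g y t ≤ M * κ ^ 12 * ((t - t₀) ^ 12)⁻¹ * exp (-12 * y) := by
    intro y t ht
    have htt : 0 < t - t₀ := by linarith [ht.1]
    rcases lt_or_ge ((t - t₀) * exp y) κ with hlt | hge
    · have h1 : 1 ≤ (κ * ((t - t₀) * exp y)⁻¹) ^ 12 := by
        apply one_le_pow₀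
        rw [← div_eq_mul_inv, one_le_div (by positivity)]
        exact hlt.le
      have h2 : (κ * ((t - t₀) * exp y)⁻¹) ^ 12
          = κ ^ 12 * ((t - t₀) ^ 12)⁻¹ * exp (-12 * y) := by
        have : exp (-12 * y) = (exp y ^ 12)⁻¹ := by
          rw [← exp_nat_mul, ← exp_neg]; norm_num
        rw [this]
        field_simp
      have h3 := S.le y t (by linarith)
      calc g y t ≤ M * 1 := by linarith
        _ ≤ M * (κ ^ 12 * ((t - t₀) ^ 12)⁻¹ * exp (-12 * y)) := by
            rw [← h2]; exact mul_le_mul_of_nonneg_left h1 (by linarith)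
        _ = _ := by ring
    have key : ∀ ε > 0, g y t ≤ M * κ ^ 12 * ((t - t₀) ^ 12)⁻¹ * exp (-12 * y)
        + ε * exp (-2 * y + 5 * t) := by
      intro ε hε
      obtain ⟨Y, hY⟩ := S.decay (t₂ + 1) ε (by linarith) hε
      obtain ⟨Z, hZ1, hZ2⟩ : ∃ Z, Y ≤ Z ∧ y ≤ Z := ⟨max Y y, le_max_left _ _, le_max_right _ _⟩
      let K : Set (ℝ × ℝ) := {p | p.2 ∈ Icc t₀ t₂ ∧ κ ≤ (p.2 - t₀) * exp p.1 ∧ p.1 ≤ Z}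
      have hKt : ∀ z τ, (z, τ) ∈ K → 0 < τ - t₀ := by
        intro z τ hz
        have h1 : κ ≤ (τ - t₀) * exp z := hz.2.1
        by_contra hcon
        have := mul_nonpos_of_nonpos_of_nonneg (not_lt.1 hcon) (exp_pos z).le
        linarith
      have hKc : IsCompact K := by
        refine (isCompact_Icc.prod isCompact_Icc :
          IsCompact (Icc (log (κ / (t₂ - t₀))) Z ×ˢ Icc t₀ t₂)).of_isClosed_subset ?_ ?_
        · refine IsClosed.inter (isClosed_Icc.preimage continuous_snd) (IsClosed.inter ?_ ?_)
          · exact isClosed_le (f := fun _ : ℝ × ℝ => κ) (g := fun p : ℝ × ℝ => (p.2 - t₀) * exp p.1)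
              continuous_const (by fun_prop)
          · exact isClosed_le continuous_fst continuous_const
        · rintro ⟨z, τ⟩ hz
          refine ⟨⟨?_, hz.2.2⟩, hz.1⟩
          have h1 : κ ≤ (τ - t₀) * exp z := hz.2.1
          have h2 : τ ≤ t₂ := hz.1.2
          have h3 : 0 < t₂ - t₀ := by linarith
          rw [Real.log_le_iff_le_exp (by positivity), div_le_iff₀ h3]
          nlinarith [exp_pos z]
      have hcont : ContinuousOn (fun p : ℝ × ℝ => ((p.2 - t₀) ^ 12)⁻¹) K := by
        refine ContinuousOn.inv₀ (by fun_prop) fun p hp => ?_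
        exact pow_ne_zero _ (hKt p.1 p.2 hp).ne'
      refine S.super_barrier hKc (fun z τ hz => ht₀.trans_le hz.1.1)
        (s := fun z τ => M * κ ^ 12 * ((τ - t₀) ^ 12)⁻¹ * exp (-12 * z) + ε * exp (-2 * z + 5 * τ))
        (((continuousOn_const.mul hcont).mul (by fun_prop)).add (by fun_prop)) ?_ ?_ y t
        ⟨⟨by linarith, ht.2⟩, hge, hZ2⟩
      · intro z τ hz
        have := hKt z τ hz
        positivity
      intro z τ hz hlt
      have hτ := hKt z τ hz
      have hτ0 : 0 < τ := ht₀.trans_le hz.1.1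
      have hS1 : 0 < M * κ ^ 12 * ((τ - t₀) ^ 12)⁻¹ * exp (-12 * z) := by positivity
      have hS2 : 0 < ε * exp (-2 * z + 5 * τ) := by positivity
      have hx1 : κ ≤ (τ - t₀) * exp z := hz.2.1
      have hx2 : κ < (τ - t₀) * exp z := by
        refine lt_of_le_of_ne hx1 fun h => ?_
        have h2 : κ ^ 12 * ((τ - t₀) ^ 12)⁻¹ * exp (-12 * z) = 1 := by
          have : exp (-12 * z) = (exp z ^ 12)⁻¹ := by
            rw [← exp_nat_mul, ← exp_neg]; norm_num
          rw [this, h]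
          field_simp
        have h3 : M * κ ^ 12 * ((τ - t₀) ^ 12)⁻¹ * exp (-12 * z) = M := by
          linear_combination M * h2
        linarith [S.le z τ hτ0]
      have hzZ : z < Z := by
        refine lt_of_le_of_ne hz.2.2 fun h => ?_
        have h1 := hY z (by linarith) τ hτ0 (by linarith [hz.1.2])
        have h2 : ε * exp (-2 * z + 5 * τ) < g z τ := by linarith
        have h3 := mul_lt_mul_of_pos_left h2 (exp_pos (2 * z))
        have h4 : exp (2 * z) * (ε * exp (-2 * z + 5 * τ)) = ε * exp (5 * τ) := by
          have : exp (2 * z) * exp (-2 * z + 5 * τ) = exp (5 * τ) := by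
            rw [← exp_add]; congr 1; ring
          linear_combination ε * this
        have h5 : 1 ≤ exp (5 * τ) := one_le_exp (by linarith)
        nlinarith
      refine ⟨?_, ?_, fun z => -12 * (M * κ ^ 12 * ((τ - t₀) ^ 12)⁻¹ * exp (-12 * z))
        + -2 * (ε * exp (-2 * z + 5 * τ)),
        144 * (M * κ ^ 12 * ((τ - t₀) ^ 12)⁻¹ * exp (-12 * z)) + 4 * (ε * exp (-2 * z + 5 * τ)),
        -12 / (τ - t₀) * (M * κ ^ 12 * ((τ - t₀) ^ 12)⁻¹ * exp (-12 * z))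
          + 5 * (ε * exp (-2 * z + 5 * τ)), ?_, ?_, ?_, ?_⟩
      · have hc : ContinuousAt (fun z' => (τ - t₀) * exp z') z := by fun_prop
        filter_upwards [hc.eventually (lt_mem_nhds hx2), Iio_mem_nhds hzZ] with z' h1 h2
        exact ⟨hz.1, h1.le, le_of_lt h2⟩
      · have hc : ContinuousAt (fun τ' => (τ' - t₀) * exp z) τ := by fun_prop
        filter_upwards [nhdsWithin_le_nhds (hc.eventually (lt_mem_nhds hx2)),
          Ico_mem_nhdsLT (sub_pos.1 hτ)] with τ' h1 h2
        exact ⟨⟨h2.1, h2.2.le.trans hz.1.2⟩, h1.le, hzZ.le⟩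
      · refine Eventually.of_forall fun z => ?_
        have e1 := (((hasDerivAt_id z).const_mul (-12)).exp).const_mul
          (M * κ ^ 12 * ((τ - t₀) ^ 12)⁻¹)
        have e2 := ((((hasDerivAt_id z).const_mul (-2)).add_const (5 * τ)).exp).const_mul ε
        refine (e1.add e2).congr_deriv ?_
        simp only [id]
        ring
      · have e1 := ((((hasDerivAt_id z).const_mul (-12)).exp).const_mul
          (M * κ ^ 12 * ((τ - t₀) ^ 12)⁻¹)).const_mul (-12)
        have e2 := (((((hasDerivAt_id z).const_mul (-2)).add_const
          (5 * τ)).exp).const_mul ε).const_mul (-2)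
        refine (e1.add e2).congr_deriv ?_
        simp only [id]
        ring
      · have e1 := (((((hasDerivAt_id τ).sub_const t₀).pow 12).inv
          (pow_ne_zero _ hτ.ne')).const_mul (M * κ ^ 12)).mul_const (exp (-12 * z))
        have e2 := ((((hasDerivAt_id τ).const_mul 5).const_add (-2 * z)).exp).const_mul ε
        refine (e1.add e2).congr_deriv ?_
        simp only [id, Pi.pow_apply, Nat.cast_ofNat, Nat.reduceSub]
        have := hτ.ne'
        field_simp
      · have hg := S.nonneg z τ hτ0
        have h1 : 0 ≤ exp (-z) * g z τ * (M * κ ^ 12 * ((τ - t₀) ^ 12)⁻¹ * exp (-12 * z)) :=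
          by positivity
        have h2 : 0 ≤ exp (-z) * g z τ * (ε * exp (-2 * z + 5 * τ)) := by positivity
        -- `10 x > 154 + 12 / (τ - t₀)` on `K`
        have h3 : 154 - 10 * exp z < -12 / (τ - t₀) := by
          rw [lt_div_iff₀ hτ]
          have : τ ≤ t₂ := hz.1.2
          nlinarith
        have h4 := mul_lt_mul_of_pos_right h3 hS1
        linarith only [h1, h2, h4, hS2]
    refine le_of_forall_pos_le_add fun δ hδ => ?_
    have := key (δ / exp (-2 * y + 5 * t)) (by positivity)
    rwa [div_mul_cancel₀ _ (exp_pos _).ne'] at this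
  have h10 : 0 < t₁ - t₀ := by linarith
  refine ⟨M * κ ^ 12 * ((t₁ - t₀) ^ 12)⁻¹, ?_, fun y t ht => (main y t ht).trans ?_⟩
  · have : 1 ≤ κ ^ 12 * ((t₁ - t₀) ^ 12)⁻¹ := by
      rw [← div_eq_mul_inv, one_le_div (by positivity)]
      exact pow_le_pow_left₀ h10.le (by linarith) _
    nlinarith
  · gcongr
    exact ht.1

/-- Gaussian lower bound in `y = log x` near `x = 0`, from the subsolution
`ε exp (-k (1 - y)² / (t - t₀))` with `ε` a lower bound of `g` on the line `y = 0`. -/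
lemma gaussian_lower_bound (S : LogSol g gy gyy gt M) (hpos : ∀ y t, 0 < t → 0 < g y t)
    {t₁ t₂ : ℝ} (ht₁ : 0 < t₁) (h12 : t₁ ≤ t₂) :
    ∃ ε κ, 0 < ε ∧ 0 < κ ∧ ∀ y ≤ 0, ∀ t ∈ Icc t₁ t₂, ε * exp (-κ * (1 - y) ^ 2) ≤ g y t := by
  obtain ⟨t₀, ht₀, h01⟩ : ∃ t₀, 0 < t₀ ∧ t₀ < t₁ := ⟨t₁ / 2, by linarith, by linarith⟩
  have h10 : 0 < t₁ - t₀ := by linarith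
  obtain ⟨k, hk⟩ : ∃ k, k = 1 + 4 * (t₂ - t₀) := ⟨_, rfl⟩
  have hk1 : 1 ≤ k := by linarith
  obtain ⟨ε, hε, hεg⟩ : ∃ ε, 0 < ε ∧ ∀ t ∈ Icc t₀ t₂, ε ≤ g 0 t := by
    obtain ⟨t, ht, hmin⟩ := isCompact_Icc.exists_isMinOn (nonempty_Icc.2 (by linarith : t₀ ≤ t₂))
      (f := fun t => g 0 t)
      (fun t ht => (S.ht 0 t (ht₀.trans_le ht.1)).continuousAt.continuousWithinAt)
    exact ⟨g 0 t, hpos 0 t (ht₀.trans_le ht.1), fun τ hτ => hmin hτ⟩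
  refine ⟨ε, k / (t₁ - t₀), hε, by positivity, fun y hy t ht => ?_⟩
  have htt : 0 < t - t₀ := by linarith [ht.1]
  have h1 : ε * exp (-(k / (t₁ - t₀)) * (1 - y) ^ 2) ≤ ε * exp (-(k / (t - t₀)) * (1 - y) ^ 2) := by
    have : k / (t - t₀) ≤ k / (t₁ - t₀) := by gcongr; exact ht.1
    gcongr
  refine h1.trans ?_
  refine le_of_forall_pos_le_add fun η hη => ?_
  -- `s = ε exp (-k L² / (τ - t₀))` is below `η` when `L = 1 - z` is large or `τ - t₀` is small
  obtain ⟨R, hR1, hRη⟩ : ∃ R, 1 ≤ R ∧ ε * exp (-R) ≤ η := by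
    refine ⟨max 1 (-log (η / ε)), le_max_left _ _, ?_⟩
    have : exp (-(max 1 (-log (η / ε)))) ≤ η / ε := by
      rw [← Real.le_log_iff_exp_le (by positivity)]
      linarith [le_max_right 1 (-log (η / ε))]
    rw [le_div_iff₀ hε] at this
    linarith
  have hkT : 4 ≤ k / (t₂ - t₀) := by
    rw [le_div_iff₀ (by linarith)]; linarith
  have hκ4 : ∀ τ, 0 < τ - t₀ → τ ≤ t₂ → 4 ≤ k / (τ - t₀) := by
    intro τ h1 h2
    refine hkT.trans ?_
    gcongr
  obtain ⟨Z, hZ1, hZ2⟩ : ∃ Z, R ≤ Z ∧ -y ≤ Z := ⟨max R (-y), le_max_left _ _, le_max_right _ _⟩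
  obtain ⟨d, hd, hd1, hd2⟩ : ∃ d, 0 < d ∧ t₀ + d ≤ t ∧ R * d ≤ 1 := by
    refine ⟨min (t - t₀) (1 / R), by positivity, by linarith [min_le_left (t - t₀) (1 / R)], ?_⟩
    have := mul_le_mul_of_nonneg_left (min_le_right (t - t₀) (1 / R)) (by linarith : 0 ≤ R)
    rwa [mul_one_div_cancel (by positivity)] at this
  have hKτ : ∀ z τ, (z, τ) ∈ Icc (-Z) 0 ×ˢ Icc (t₀ + d) t₂ → 0 < τ - t₀ := fun z τ hz => by
    linarith [hz.2.1]
  suffices ε * exp (-(k / (t - t₀)) * (1 - y) ^ 2) - η ≤ g y t by linarith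
  have hcont : ContinuousOn (fun p : ℝ × ℝ => k / (p.2 - t₀)) (Icc (-Z) 0 ×ˢ Icc (t₀ + d) t₂) :=
    ContinuousOn.div (by fun_prop) (by fun_prop) fun p hp => (hKτ p.1 p.2 hp).ne'
  refine S.sub_barrier (isCompact_Icc.prod isCompact_Icc :
      IsCompact (Icc (-Z) 0 ×ˢ Icc (t₀ + d) t₂)) (fun z τ hz => by linarith [hz.2.1])
      (s := fun z τ => ε * exp (-(k / (τ - t₀)) * (1 - z) ^ 2) - η)
      ((continuousOn_const.mul (hcont.neg.mul (by fun_prop)).rexp).sub continuousOn_const)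
      ?_ y t ⟨⟨by linarith, hy⟩, hd1, ht.2⟩
  intro z τ hz hlt
  have hτ := hKτ z τ hz
  have hτ0 : 0 < τ := by linarith
  have hg := hpos z τ hτ0
  have hz0 : z ≤ 0 := hz.1.2
  have hκ := hκ4 τ hτ hz.2.2
  obtain ⟨κ, hκdef⟩ : ∃ κ, κ = k / (τ - t₀) := ⟨_, rfl⟩
  rw [← hκdef] at hκ
  have hs0 : 0 < ε * exp (-κ * (1 - z) ^ 2) := by positivity
  simp only [← hκdef] at hlt
  have hexp : κ * (1 - z) ^ 2 < R := by
    by_contra hcon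
    have : exp (-κ * (1 - z) ^ 2) ≤ exp (-R) := exp_le_exp.2 (by linarith)
    have := mul_le_mul_of_nonneg_left this hε.le
    linarith
  have a1 : -Z < z := by
    by_contra hcon
    nlinarith
  have a2 : z < 0 := by
    refine lt_of_le_of_ne hz0 fun h => ?_
    have h3 := hεg τ ⟨by linarith, hz.2.2⟩
    have h4 : exp (-κ * (1 - z) ^ 2) ≤ 1 := exp_le_one_iff.2 (by nlinarith)
    rw [h] at hlt h4
    nlinarith
  have a3 : t₀ + d < τ := by
    refine lt_of_le_of_ne hz.2.1 fun h => ?_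
    have h3 : κ * d = k := by rw [hκdef, ← h, add_sub_cancel_left]; field_simp
    have h5 : R ≤ κ := by nlinarith
    nlinarith
  obtain ⟨b1, b2⟩ := eventually_mem_rect ⟨a1, a2⟩ ⟨a3, hz.2.2⟩
  refine ⟨b1, b2, fun z => ε * exp (-κ * (1 - z) ^ 2) * (2 * κ * (1 - z)),
    ε * exp (-κ * (1 - z) ^ 2) * (4 * κ ^ 2 * (1 - z) ^ 2 - 2 * κ),
    ε * exp (-κ * (1 - z) ^ 2) * (κ ^ 2 / k * (1 - z) ^ 2), ?_, ?_, ?_, ?_⟩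
  · refine Eventually.of_forall fun z => ?_
    have := ((((((hasDerivAt_id z).const_sub 1).pow 2).const_mul (-κ)).exp).const_mul ε).sub_const η
    simp only [← hκdef]
    refine this.congr_deriv ?_
    simp only [id, Pi.pow_apply, Nat.cast_ofNat]
    ring
  · have := ((((((hasDerivAt_id z).const_sub 1).pow 2).const_mul (-κ)).exp).const_mul ε).mul
      (((hasDerivAt_id z).const_sub 1).const_mul (2 * κ))
    refine this.congr_deriv ?_
    simp only [id, Pi.pow_apply, Nat.cast_ofNat]
    ring
  · have := (((((((hasDerivAt_id τ).sub_const t₀).inv hτ.ne').const_mul k).neg).mul_const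
      ((1 - z) ^ 2)).exp.const_mul ε).sub_const η
    have h2 : HasDerivAt (fun τ => ε * exp (-(k / (τ - t₀)) * (1 - z) ^ 2) - η) _ τ := this
    refine h2.congr_deriv ?_
    simp only [id, Pi.inv_apply, Pi.neg_apply]
    rw [show -(k * (τ - t₀)⁻¹) = -κ by rw [hκdef]; rfl, hκdef]
    field_simp
  · have hsub : ε * exp (-κ * (1 - z) ^ 2) - η < ε * exp (-κ * (1 - z) ^ 2) := by linarith
    obtain ⟨s, hs⟩ : ∃ s, s = ε * exp (-κ * (1 - z) ^ 2) := ⟨_, rfl⟩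
    beta_reduce
    rw [← hs] at hs0 hlt ⊢
    have hL : 1 ≤ 1 - z := by linarith
    obtain ⟨L, hLdef⟩ : ∃ L, L = 1 - z := ⟨_, rfl⟩
    rw [← hLdef] at hL ⊢
    have c1 : -2 * s ≤ (2 * exp z - 2) * g z τ := by
      have : 0 ≤ exp z * g z τ := by positivity
      linarith
    have c2 : -1 * (s * (2 * κ * L))
        ≤ (exp z - 1 + 2 * exp (-z) * g z τ) * (s * (2 * κ * L)) := by
      have h1 : 0 ≤ exp z + 2 * exp (-z) * g z τ := by positivity
      have h2 : 0 ≤ s * (2 * κ * L) := by positivity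
      have := mul_nonneg h1 h2
      linarith
    have c3 : κ ^ 2 / k * L ^ 2 ≤ κ ^ 2 * L ^ 2 := by
      gcongr
      exact div_le_self (by positivity) hk1
    have c4 : κ ^ 2 / k * L ^ 2 < 4 * κ ^ 2 * L ^ 2 - 2 * κ - 2 * κ * L - 2 := by
      have h2 : κ * 1 ≤ κ * L := mul_le_mul_of_nonneg_left hL (by linarith)
      have h1 : 4 ≤ κ * L := by linarith
      nlinarith only [h1, h2, c3]
    have c5 := mul_lt_mul_of_pos_left c4 hs0
    linarith only [c1, c2, c5]

end LogSol

/-! ### Gradient and time-derivative bounds -/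

/-- Powers of the logarithm of `m / u` are absorbed by `u`. -/
lemma mul_log_pow_le {u m : ℝ} (hu : 0 < u) (hum : u ≤ m) (k : ℕ) :
    u * (2 + (log m - log u)) ^ k ≤ m * (k.factorial * exp 2) := by
  have hm : 0 < m := hu.trans_le hum
  have hv : 0 ≤ log m - log u := sub_nonneg.2 (log_le_log hu hum)
  have h1 := Real.pow_div_factorial_le_exp (2 + (log m - log u)) (by linarith) k
  rw [div_le_iff₀ (by positivity)] at h1
  have h2 : exp (2 + (log m - log u)) = exp 2 * (m / u) := by
    rw [exp_add, exp_sub, exp_log hm, exp_log hu]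
  calc u * (2 + (log m - log u)) ^ k ≤ u * (exp (2 + (log m - log u)) * k.factorial) := by gcongr
    _ = m * (k.factorial * exp 2) := by rw [h2]; field_simp

lemma abs_sub_le_of_deriv {f f' : ℝ → ℝ} {a b C : ℝ} (hab : a ≤ b)
    (h : ∀ z ∈ Icc a b, HasDerivAt f (f' z) z) (hC : ∀ z ∈ Icc a b, |f' z| ≤ C) :
    |f b - f a| ≤ C * (b - a) := by
  have := Convex.norm_image_sub_le_of_norm_hasDerivWithin_le
    (fun z hz => (h z hz).hasDerivWithinAt) hC (convex_Icc a b)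
    (left_mem_Icc.2 hab) (right_mem_Icc.2 hab)
  rwa [Real.norm_eq_abs, Real.norm_eq_abs, abs_of_nonneg (sub_nonneg.2 hab)] at this

/-- The majorant of the solution: bounded near `x = 0`, of order `x ^ (-12)` at infinity. -/
noncomputable def majorant (A y : ℝ) : ℝ := A * exp (-12 * max y 0)

namespace LogSol

variable {g gy gyy gt : ℝ → ℝ → ℝ} {M : ℝ}

lemma abs_heat_le (S : LogSol g gy gyy gt M) {y t Y : ℝ} (ht : 0 < t) (hY : |y| ≤ Y) :
    |gt y t - gyy y t| ≤ (2 + 2 * M) * exp Y * |gy y t| + 2 * exp Y * g y t := by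
  have h1 := S.abs_drift_le ht hY
  have hg := S.nonneg y t ht
  have h2 : |2 * exp y - 2| ≤ 2 * exp Y := by
    have e1 : exp y ≤ exp Y := exp_le_exp.2 ((le_abs_self _).trans hY)
    have e3 : 1 ≤ exp Y := one_le_exp ((abs_nonneg y).trans hY)
    have := exp_pos y
    rw [abs_le]
    constructor <;> linarith
  have h3 : gt y t - gyy y t = (exp y - 1 + 2 * exp (-y) * g y t) * gy y t
      + (2 * exp y - 2) * g y t := by linarith [S.pde y t ht]
  rw [h3]
  refine (abs_add_le _ _).trans ?_
  rw [abs_mul, abs_mul, abs_of_nonneg hg]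
  gcongr

/-- The logarithmic gradient estimate at the natural scale `exp (-|y|)` of the equation. -/
lemma gradient_bound (S : LogSol g gy gyy gt M) (hpos : ∀ y t, 0 < t → 0 < g y t)
    {t₁ t₂ : ℝ} (ht₁ : 0 < t₁) (h12 : t₁ ≤ t₂) :
    ∃ C A, 0 ≤ C ∧ M ≤ A ∧ (∀ y, ∀ t ∈ Icc t₁ t₂, g y t ≤ majorant A y) ∧
      ∀ y, ∀ t ∈ Icc t₁ t₂, |gy y t| ≤
        C * exp |y| * (g y t * (2 + (log (majorant A y) - log (g y t))) ^ 2) := by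
  have hM := S.one_le
  obtain ⟨A₀, hA₀, hdec⟩ := S.exp_decay (half_pos ht₁) (by linarith : t₁ / 2 ≤ t₂)
  have hdec' : ∀ y, ∀ t ∈ Icc (t₁ / 2) t₂, g y t ≤ A₀ * exp (-12 * max y 0) := by
    intro y t ht
    rcases le_total 0 y with h | h
    · rw [max_eq_left h]; exact hdec y t ht
    · rw [max_eq_right h]
      simpa using (S.le y t (by linarith [ht.1])).trans hA₀
  obtain ⟨c, hc, hc1, hc2⟩ : ∃ c, 0 < c ∧ c ≤ 1 / 2 ∧ c ^ 2 ≤ t₁ / 2 := by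
    refine ⟨min (1 / 2) t₁, by positivity, min_le_left _ _, ?_⟩
    have h0 : 0 < min (1 / 2) t₁ := by positivity
    rw [sq]
    calc _ ≤ (1 / 2) * t₁ := mul_le_mul (min_le_left _ _) (min_le_right _ _) h0.le (by norm_num)
      _ = _ := by ring
  set B := (2 + 2 * M) * exp 1 with hB
  have hB0 : 0 ≤ B := by positivity
  have hAA : A₀ ≤ A₀ * exp 12 := le_mul_of_one_le_right (by linarith) (one_le_exp (by norm_num))
  refine ⟨(16 + 8 * B) / c, A₀ * exp 12, by positivity, hA₀.trans hAA, ?_, ?_⟩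
  · intro y t ht
    refine (hdec' y t ⟨by linarith [ht.1], ht.2⟩).trans ?_
    rw [majorant]
    gcongr
  intro y₀ t₀ ht₀
  have hE : exp |y₀| * exp (-|y₀|) = 1 := by rw [← exp_add]; simp
  obtain ⟨l, hl⟩ : ∃ l, l = c * exp (-|y₀|) := ⟨_, rfl⟩
  have hl0 : 0 < l := by rw [hl]; positivity
  have hexp1 : exp (-|y₀|) ≤ 1 := exp_le_one_iff.2 (by linarith [abs_nonneg y₀])
  have hlc : l ≤ c := by rw [hl]; exact mul_le_of_le_one_right hc.le hexp1
  have hl2 : l ^ 2 ≤ t₁ / 2 := (pow_le_pow_left₀ hl0.le hlc 2).trans hc2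
  have hlE : l * exp (|y₀| + 1) ≤ exp 1 := by
    rw [hl, exp_add]
    have : c * exp (-|y₀|) * (exp |y₀| * exp 1) = c * exp 1 := by
      linear_combination c * exp 1 * hE
    rw [this]
    exact mul_le_of_le_one_left (exp_pos _).le (by linarith)
  have hyl : ∀ y ∈ Icc (y₀ - 2 * l) (y₀ + 2 * l), |y - y₀| ≤ 1 := fun y hy =>
    abs_le.2 ⟨by linarith [hy.1], by linarith [hy.2]⟩
  have hya : ∀ y ∈ Icc (y₀ - 2 * l) (y₀ + 2 * l), |y| ≤ |y₀| + 1 := fun y hy => by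
    have := abs_sub_abs_le_abs_sub y y₀
    linarith [hyl y hy]
  have htl : ∀ t ∈ Icc (t₀ - l ^ 2) t₀, t ∈ Icc (t₁ / 2) t₂ := fun t ht =>
    ⟨by linarith [ht.1, ht₀.1], by linarith [ht.2, ht₀.2]⟩
  have htp : ∀ t ∈ Icc (t₀ - l ^ 2) t₀, 0 < t := fun t ht => by linarith [(htl t ht).1]
  have key := log_gradient_estimate hB0 (u := g) (uy := gy) (uyy := gyy) (ut := gt)
    (y₀ := y₀) (t₀ := t₀) (M := majorant (A₀ * exp 12) y₀) hl0
    (S.cont.mono fun p hp => ⟨trivial, htp _ hp.2⟩)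
    (fun y _ t ht => S.hy y t (htp t ht)) (fun y _ t ht => S.hyy y t (htp t ht))
    (fun y _ t ht => S.ht y t (htp t ht)) (fun y _ t ht => hpos y t (htp t ht)) ?_ ?_
  · rw [div_mul_eq_mul_div, div_mul_eq_mul_div, le_div_iff₀ hc]
    have h1 := mul_le_mul_of_nonneg_left key (exp_pos |y₀|).le
    have h2 : exp |y₀| * (l * |gy y₀ t₀|) = |gy y₀ t₀| * c := by
      rw [hl]; linear_combination c * |gy y₀ t₀| * hE
    linarith
  · intro y hy t ht
    refine (hdec' y t (htl t ht)).trans ?_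
    rw [majorant, mul_assoc, ← exp_add]
    have : max y₀ 0 ≤ max y 0 + 1 := by
      have := (abs_le.1 (hyl y hy)).1
      rcases le_total 0 y₀ with h | h
      · rw [max_eq_left h]; linarith [le_max_left y 0]
      · rw [max_eq_right h]; linarith [le_max_right y 0]
    have hA0 : 0 ≤ A₀ := by linarith
    gcongr
    linarith
  · intro y hy t ht
    have h1 := S.abs_heat_le (htp t ht) (hya y hy)
    have hg := S.nonneg y t (htp t ht)
    have h2 := mul_le_mul_of_nonneg_left h1 (sq_nonneg l)
    have h3 : (l * exp (|y₀| + 1)) * ((2 + 2 * M) * (l * |gy y t|))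
        ≤ exp 1 * ((2 + 2 * M) * (l * |gy y t|)) :=
      mul_le_mul_of_nonneg_right hlE (by positivity)
    have h4 : (l * exp (|y₀| + 1)) * (l * (2 * g y t)) ≤ exp 1 * (1 * (2 * g y t)) := by
      refine mul_le_mul hlE ?_ (by positivity) (exp_pos _).le
      exact mul_le_mul_of_nonneg_right (by linarith) (by positivity)
    have h5 : 0 ≤ exp 1 * (M * g y t) := by positivity
    rw [hB]
    linarith only [h2, h3, h4, h5]

lemma gy_locally_bounded (S : LogSol g gy gyy gt M) (hpos : ∀ y t, 0 < t → 0 < g y t)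
    {t₁ t₂ : ℝ} (ht₁ : 0 < t₁) (h12 : t₁ ≤ t₂) (Y : ℝ) :
    ∃ L, 0 ≤ L ∧ ∀ y, |y| ≤ Y → ∀ t ∈ Icc t₁ t₂, |gy y t| ≤ L := by
  obtain ⟨C, A, hC, hA, h1, h2⟩ := S.gradient_bound hpos ht₁ h12
  have hA0 : 0 ≤ A := by linarith [S.one_le]
  refine ⟨C * exp Y * (A * ((2).factorial * exp 2)), by positivity, fun y hy t ht => ?_⟩
  refine (h2 y t ht).trans ?_
  have h3 := mul_log_pow_le (hpos y t (by linarith [ht.1])) (h1 y t ht) 2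
  have h4 : majorant A y ≤ A :=
    mul_le_of_le_one_right hA0 (exp_le_one_iff.2 (by linarith [le_max_right y 0]))
  have h5 : g y t * (2 + (log (majorant A y) - log (g y t))) ^ 2
      ≤ A * ((2).factorial * exp 2) := h3.trans (by gcongr)
  have h6 : 0 ≤ g y t * (2 + (log (majorant A y) - log (g y t))) ^ 2 :=
    mul_nonneg (S.nonneg y t (by linarith [ht.1])) (sq_nonneg _)
  have h7 := exp_le_exp.2 hy
  gcongr

end LogSol

namespace LogSol

variable {g gy gyy gt : ℝ → ℝ → ℝ} {M : ℝ}

/-- Local bound for the difference quotients of `gy`, uniform in the step `h`: the gradient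
estimate is applied to the difference quotient `(g (y + h) - g y) / h`, shifted to be at least
`1`. -/
lemma gy_locally_lipschitz (S : LogSol g gy gyy gt M) (hpos : ∀ y t, 0 < t → 0 < g y t)
    {t₁ t₂ : ℝ} (ht₁ : 0 < t₁) (h12 : t₁ ≤ t₂) (Y : ℝ) :
    ∃ C, ∀ y, |y| ≤ Y → ∀ t ∈ Icc t₁ t₂, ∀ h, 0 < h → h ≤ 1 →
      |gy (y + h) t - gy y t| ≤ C * h := by
  have hM := S.one_le
  obtain ⟨L, hL0, hL⟩ := S.gy_locally_bounded hpos (half_pos ht₁) (by linarith : t₁ / 2 ≤ t₂) (Y + 2)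
  set E := exp (Y + 2) with hE
  obtain ⟨l, hl0, hl1, hl2⟩ : ∃ l, 0 < l ∧ l ≤ 1 / 2 ∧ l ^ 2 ≤ t₁ / 2 := by
    refine ⟨min (1 / 2) t₁, by positivity, min_le_left _ _, ?_⟩
    have h0 : 0 < min (1 / 2) t₁ := by positivity
    rw [sq]
    calc _ ≤ (1 / 2) * t₁ := mul_le_mul (min_le_left _ _) (min_le_right _ _) h0.le (by norm_num)
      _ = _ := by ring
  -- bound for the drift, and Lipschitz constants of the drift and of the zero order term
  obtain ⟨B0, hB0⟩ : ∃ B0, B0 = (2 + 2 * M) * E := ⟨_, rfl⟩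
  obtain ⟨B1, hB1⟩ : ∃ B1, B1 = (1 + 2 * M + 2 * L) * E := ⟨_, rfl⟩
  obtain ⟨B2, hB2⟩ : ∃ B2, B2 = (2 * M + 2 * L) * E := ⟨_, rfl⟩
  have hE0 : 0 < E := exp_pos _
  have hB00 : 0 ≤ B0 := by rw [hB0]; positivity
  have hB10 : 0 ≤ B1 := by rw [hB1]; positivity
  have hB20 : 0 ≤ B2 := by rw [hB2]; positivity
  obtain ⟨B, hB⟩ : ∃ B, B = B0 + B1 * L + B2 := ⟨_, rfl⟩
  have hBnn : 0 ≤ B := by rw [hB]; positivity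
  refine ⟨(16 + 8 * B) * ((2 * L + 1) * ((2).factorial * exp 2)) / l, ?_⟩
  intro y₀ hy₀ t₀ ht₀ h hh hh1
  have hya : ∀ y ∈ Icc (y₀ - 2 * l) (y₀ + 2 * l), ∀ z ∈ Icc y (y + h), |z| ≤ Y + 2 := by
    intro y hy z hz
    have := abs_le.1 hy₀
    exact abs_le.2 ⟨by linarith [hy.1, hz.1], by linarith [hy.2, hz.2]⟩
  have htl : ∀ t ∈ Icc (t₀ - l ^ 2) t₀, t ∈ Icc (t₁ / 2) t₂ := fun t ht =>
    ⟨by linarith [ht.1, ht₀.1], by linarith [ht.2, ht₀.2]⟩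
  have htp : ∀ t ∈ Icc (t₀ - l ^ 2) t₀, 0 < t := fun t ht => by linarith [(htl t ht).1]
  have hv : ∀ y ∈ Icc (y₀ - 2 * l) (y₀ + 2 * l), ∀ t ∈ Icc (t₀ - l ^ 2) t₀,
      |(g (y + h) t - g y t) / h| ≤ L := by
    intro y hy t ht
    have := abs_sub_le_of_deriv (f := fun z => g z t) (f' := fun z => gy z t) (C := L)
      (by linarith : y ≤ y + h) (fun z _ => S.hy z t (htp t ht))
      (fun z hz => hL z (hya y hy z hz) t (htl t ht))
    rw [abs_div, abs_of_pos hh, div_le_iff₀ hh]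
    simpa using this
  have sh : ∀ y : ℝ, HasDerivAt (fun z => z + h) 1 y := fun y => (hasDerivAt_id y).add_const h
  have key := log_gradient_estimate hBnn (y₀ := y₀) (t₀ := t₀) (l := l) (M := 2 * L + 1)
    (u := fun y t => (g (y + h) t - g y t) / h + (L + 1))
    (uy := fun y t => (gy (y + h) t - gy y t) / h)
    (uyy := fun y t => (gyy (y + h) t - gyy y t) / h)
    (ut := fun y t => (gt (y + h) t - gt y t) / h) hl0 ?_ ?_ ?_ ?_ ?_ ?_ ?_
  · have m1 : y₀ ∈ Icc (y₀ - 2 * l) (y₀ + 2 * l) := ⟨by linarith, by linarith⟩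
    have m2 : t₀ ∈ Icc (t₀ - l ^ 2) t₀ := ⟨by linarith [sq_nonneg l], le_refl _⟩
    have h3 := abs_le.1 (hv y₀ m1 t₀ m2)
    have h4 := mul_log_pow_le (u := (g (y₀ + h) t₀ - g y₀ t₀) / h + (L + 1)) (m := 2 * L + 1)
      (by linarith) (by linarith) 2
    have h5 := key.trans (mul_le_mul_of_nonneg_left h4 (by linarith : 0 ≤ 16 + 8 * B))
    rw [abs_div, abs_of_pos hh, mul_div_assoc', div_le_iff₀ hh] at h5
    rw [div_mul_eq_mul_div, le_div_iff₀ hl0]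
    linarith
  · have c1 : ContinuousOn (fun p : ℝ × ℝ => g (p.1 + h) p.2)
        (Icc (y₀ - 2 * l) (y₀ + 2 * l) ×ˢ Icc (t₀ - l ^ 2) t₀) :=
      S.cont.comp (f := fun p : ℝ × ℝ => (p.1 + h, p.2)) (by fun_prop)
        fun p hp => ⟨trivial, htp _ hp.2⟩
    have c2 : ContinuousOn (fun p : ℝ × ℝ => g p.1 p.2)
        (Icc (y₀ - 2 * l) (y₀ + 2 * l) ×ˢ Icc (t₀ - l ^ 2) t₀) :=
      S.cont.mono fun p hp => ⟨trivial, htp _ hp.2⟩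
    exact ((c1.sub c2).div_const h).add continuousOn_const
  · intro y hy t ht
    have e1 := (S.hy (y + h) t (htp t ht)).comp y (sh y)
    have := ((e1.sub (S.hy y t (htp t ht))).div_const h).add_const (L + 1)
    exact this.congr_deriv (by rw [mul_one])
  · intro y hy t ht
    have e1 := (S.hyy (y + h) t (htp t ht)).comp y (sh y)
    have := (e1.sub (S.hyy y t (htp t ht))).div_const h
    exact this.congr_deriv (by rw [mul_one])
  · intro y hy t ht
    exact (((S.ht (y + h) t (htp t ht)).sub (S.ht y t (htp t ht))).div_const h).add_const (L + 1)
  · intro y hy t ht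
    linarith [(abs_le.1 (hv y hy t ht)).1]
  · intro y hy t ht
    linarith [(abs_le.1 (hv y hy t ht)).2]
  · intro y hy t ht
    have ht0 := htp t ht
    have my : y ∈ Icc y (y + h) := ⟨le_refl _, by linarith⟩
    have my' : y + h ∈ Icc y (y + h) := ⟨by linarith, le_refl _⟩
    have bz : ∀ z ∈ Icc y (y + h), exp z ≤ E ∧ exp (-z) ≤ E := by
      intro z hz
      have := hya y hy z hz
      exact ⟨exp_le_exp.2 ((le_abs_self _).trans this), exp_le_exp.2 ((neg_le_abs _).trans this)⟩
    have hE1 : 1 ≤ E := one_le_exp ((abs_nonneg _).trans (hya y hy y my))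
    -- the drift is Lipschitz in `y`
    have l1 : |(exp (y + h) - 1 + 2 * exp (-(y + h)) * g (y + h) t)
        - (exp y - 1 + 2 * exp (-y) * g y t)| ≤ B1 * (y + h - y) := by
      refine abs_sub_le_of_deriv (f := fun z => exp z - 1 + 2 * exp (-z) * g z t)
        (f' := fun z => exp z + (2 * exp (-z) * gy z t - 2 * exp (-z) * g z t))
        (by linarith) (fun z hz => ?_) (fun z hz => ?_)
      · have e1 := (((hasDerivAt_id z).neg.exp).const_mul 2).mul (S.hy z t ht0)
        refine (((Real.hasDerivAt_exp z).sub_const 1).add e1).congr_deriv ?_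
        simp only [id, Pi.neg_apply]
        ring
      · obtain ⟨b1, b2⟩ := bz z hz
        have g1 := S.nonneg z t ht0
        have g2 := S.le z t ht0
        have g3 := hL z (hya y hy z hz) t (htl t ht)
        have p1 := exp_pos z
        have p2 := exp_pos (-z)
        have q1 : |exp (-z) * gy z t| ≤ E * L := by
          rw [abs_mul, abs_of_pos p2]
          exact mul_le_mul b2 g3 (abs_nonneg _) hE0.le
        have q2 : exp (-z) * g z t ≤ E * M := mul_le_mul b2 g2 g1 hE0.le
        have q3 : 0 ≤ exp (-z) * g z t := by positivity
        have q4 := abs_le.1 q1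
        have q5 : 0 ≤ E * L := by positivity
        have q6 : 0 ≤ E * M := by positivity
        rw [hB1]
        exact abs_le.2 ⟨by linarith only [b1, p1, q2, q3, q4.1, q5, q6, hE0],
          by linarith only [b1, p1, q2, q3, q4.2, q5, q6]⟩
    have l2 : |(2 * exp (y + h) - 2) * g (y + h) t - (2 * exp y - 2) * g y t|
        ≤ B2 * (y + h - y) := by
      refine abs_sub_le_of_deriv (f := fun z => (2 * exp z - 2) * g z t)
        (f' := fun z => 2 * exp z * g z t + (2 * exp z - 2) * gy z t)
        (by linarith) (fun z hz => ?_) (fun z hz => ?_)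
      · exact (((Real.hasDerivAt_exp z).const_mul 2).sub_const 2).mul (S.hy z t ht0)
      · obtain ⟨b1, b2⟩ := bz z hz
        have g1 := S.nonneg z t ht0
        have g2 := S.le z t ht0
        have g3 := hL z (hya y hy z hz) t (htl t ht)
        have p1 := exp_pos z
        have q0 : |2 * exp z - 2| ≤ 2 * E := abs_le.2 ⟨by linarith, by linarith⟩
        have q1 : |(2 * exp z - 2) * gy z t| ≤ 2 * E * L := by
          rw [abs_mul]
          exact mul_le_mul q0 g3 (abs_nonneg _) (by positivity)
        have q2 : exp z * g z t ≤ E * M := mul_le_mul b1 g2 g1 hE0.le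
        have q3 : 0 ≤ exp z * g z t := by positivity
        have q4 := abs_le.1 q1
        have q6 : 0 ≤ E * M := by positivity
        rw [hB2]
        exact abs_le.2 ⟨by linarith only [q3, q4.1, q6], by linarith only [q2, q4.2]⟩
    have hdr := S.abs_drift_le ht0 (hya y hy y my)
    rw [← hE, ← hB0] at hdr
    have hgy := hL _ (hya y hy _ my') t (htl t ht)
    have hp1 := S.pde y t ht0
    have hp2 := S.pde (y + h) t ht0
    obtain ⟨b', hb'⟩ : ∃ b', b' = exp (y + h) - 1 + 2 * exp (-(y + h)) * g (y + h) t := ⟨_, rfl⟩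
    obtain ⟨b, hb⟩ : ∃ b, b = exp y - 1 + 2 * exp (-y) * g y t := ⟨_, rfl⟩
    obtain ⟨c', hc'⟩ : ∃ c', c' = (2 * exp (y + h) - 2) * g (y + h) t := ⟨_, rfl⟩
    obtain ⟨c, hc⟩ : ∃ c, c = (2 * exp y - 2) * g y t := ⟨_, rfl⟩
    rw [← hb', ← hb] at l1
    rw [← hc', ← hc] at l2
    rw [← hb] at hdr
    rw [← hb, ← hc] at hp1
    rw [← hb', ← hc'] at hp2
    have e1 : (gt (y + h) t - gt y t) / h - (gyy (y + h) t - gyy y t) / h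
        = b * ((gy (y + h) t - gy y t) / h) + (b' - b) / h * gy (y + h) t + (c' - c) / h := by
      rw [hp1, hp2]; field_simp; ring
    have l1' : |(b' - b) / h| ≤ B1 := by
      rw [abs_div, abs_of_pos hh, div_le_iff₀ hh]; linarith
    have l2' : |(c' - c) / h| ≤ B2 := by
      rw [abs_div, abs_of_pos hh, div_le_iff₀ hh]; linarith
    have e2 : |(gt (y + h) t - gt y t) / h - (gyy (y + h) t - gyy y t) / h|
        ≤ B0 * |(gy (y + h) t - gy y t) / h| + (B1 * L + B2) := by
      rw [e1]
      refine (abs_add_three _ _ _).trans ?_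
      rw [abs_mul, abs_mul]
      have m1 := mul_le_mul_of_nonneg_right hdr (abs_nonneg ((gy (y + h) t - gy y t) / h))
      have m2 := mul_le_mul l1' hgy (abs_nonneg _) hB10
      linarith
    have hu : 1 ≤ (g (y + h) t - g y t) / h + (L + 1) := by
      linarith [(abs_le.1 (hv y hy t ht)).1]
    obtain ⟨U, hU⟩ : ∃ U, U = (g (y + h) t - g y t) / h + (L + 1) := ⟨_, rfl⟩
    obtain ⟨V, hV⟩ : ∃ V, V = |(gy (y + h) t - gy y t) / h| := ⟨_, rfl⟩
    rw [← hU] at hu ⊢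
    rw [← hV] at e2 ⊢
    have hV0 : 0 ≤ V := by rw [hV]; exact abs_nonneg _
    have hlsq : l ^ 2 ≤ 1 := by nlinarith only [hl0, hl1]
    have n1 := mul_le_mul_of_nonneg_left e2 (sq_nonneg l)
    have n2 : l ^ 2 * (B0 * V) ≤ B * (l * V) := by
      have : l ^ 2 * (B0 * V) = (l * B0) * (l * V) := by ring
      rw [this]
      refine mul_le_mul_of_nonneg_right ?_ (by positivity)
      have r1 : l * B0 ≤ 1 * B0 := mul_le_mul_of_nonneg_right (by linarith) hB00
      have r2 : 0 ≤ B1 * L := by positivity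
      linarith
    have n3 : l ^ 2 * (B1 * L + B2) ≤ B * U := by
      calc l ^ 2 * (B1 * L + B2) ≤ 1 * (B1 * L + B2) :=
            mul_le_mul_of_nonneg_right hlsq (by positivity)
        _ ≤ B * 1 := by linarith
        _ ≤ B * U := mul_le_mul_of_nonneg_left hu hBnn
    linarith

/-- The time derivative is locally bounded. -/
lemma gt_locally_bounded (S : LogSol g gy gyy gt M) (hpos : ∀ y t, 0 < t → 0 < g y t)
    {t₁ t₂ : ℝ} (ht₁ : 0 < t₁) (h12 : t₁ ≤ t₂) (Y : ℝ) :
    ∃ C, ∀ y, |y| ≤ Y → ∀ t ∈ Icc t₁ t₂, |gt y t| ≤ C := by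
  obtain ⟨L, hL0, hL⟩ := S.gy_locally_bounded hpos ht₁ h12 Y
  obtain ⟨C, hC⟩ := S.gy_locally_lipschitz hpos ht₁ h12 Y
  refine ⟨C + ((2 + 2 * M) * exp Y * L + 2 * exp Y * M), fun y hy t ht => ?_⟩
  have ht0 : 0 < t := by linarith [ht.1]
  have h1 : |gyy y t| ≤ C := by
    have hs := (S.hyy y t ht0).tendsto_slope_zero_right
    refine le_of_tendsto hs.abs ?_
    filter_upwards [Ioc_mem_nhdsGT (zero_lt_one' ℝ)] with h hh
    rw [smul_eq_mul, abs_mul, abs_inv, abs_of_pos hh.1, inv_mul_le_iff₀ hh.1]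
    linarith [hC y hy t ht h hh.1 hh.2]
  have h2 := S.abs_heat_le ht0 hy
  have h3 := abs_sub_abs_le_abs_sub (gt y t) (gyy y t)
  have h4 := hL y hy t ht
  have hM := S.one_le
  have h5 : (2 + 2 * M) * exp Y * |gy y t| ≤ (2 + 2 * M) * exp Y * L := by gcongr
  have h6 : 2 * exp Y * g y t ≤ 2 * exp Y * M :=
    mul_le_mul_of_nonneg_left (S.le y t ht0) (by positivity)
  linarith

end LogSol

/-! ### Pointwise bounds for the entropy density, the flux and the dissipation -/

/-- The entropy density `h (x, u)`, the integrand of `Hent`. -/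
noncomputable def entDensity (x u : ℝ) : ℝ :=
  x * u + u * log u - (u + x ^ 2) * log (u + x ^ 2) + x ^ 2 * log (x ^ 2)

/-- The derivative of the entropy density in `u`. -/
noncomputable def entPotential (x u : ℝ) : ℝ := x + log u - log (u + x ^ 2)

/-- An integrable weight on `(0, ∞)` dominating the entropy density and the dissipation. -/
noncomputable def weight (x : ℝ) : ℝ := if x ≤ 1 then x ^ (-1 / 2 : ℝ) else x ^ (-2 : ℝ)

lemma log_add_sub_log_le {u v : ℝ} (hu : 0 < u) (hv : 0 < v) : log (u + v) - log u ≤ v / u := by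
  rw [← log_div (by positivity) hu.ne']
  refine (log_le_sub_one_of_pos (by positivity)).trans (le_of_eq ?_)
  field_simp
  ring

lemma log_le_log_add {u v : ℝ} (hu : 0 < u) (hv : 0 < v) : log u ≤ log (u + v) :=
  log_le_log hu (by linarith)

lemma abs_entDensity_le {x u : ℝ} (hx : 0 < x) (hu : 0 < u) :
    |entDensity x u| ≤ x * u + u * (log (u + x ^ 2) - log u) + u := by
  have hx2 : 0 < x ^ 2 := by positivity
  have h1 := log_le_log_add hu hx2
  have h2 := log_le_log_add hx2 hu
  have h3 := log_add_sub_log_le hx2 hu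
  rw [le_div_iff₀ hx2, add_comm (x ^ 2)] at h3
  rw [add_comm (x ^ 2)] at h2
  have h4 : entDensity x u = x * u - u * (log (u + x ^ 2) - log u)
      - (log (u + x ^ 2) - log (x ^ 2)) * x ^ 2 := by rw [entDensity]; ring
  have h5 : 0 ≤ (log (u + x ^ 2) - log (x ^ 2)) * x ^ 2 := mul_nonneg (by linarith) hx2.le
  have h6 : 0 ≤ u * (log (u + x ^ 2) - log u) := mul_nonneg hu.le (by linarith)
  have h7 : 0 ≤ x * u := by positivity
  rw [h4]
  exact abs_le.2 ⟨by linarith, by linarith⟩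

/-- Bounds for the dissipation, the boundary term and the entropy density when `x ≤ 1`.  Here `l`
stands for `2 + log (A / u)` and `T` for the weight `x ^ (-1/2)`. -/
lemma small_x_bounds {x u A l J C C₃ T : ℝ} (hx : 0 < x) (hx1 : x ≤ 1) (hu : 0 < u) (huA : u ≤ A)
    (hl : 2 ≤ l) (hC : 0 ≤ C) (hJ : |J| ≤ C * (u * l ^ 2))
    (hlT : l ^ 4 ≤ C₃ * T) (hT : 1 ≤ T) :
    J ^ 2 / (u * (u + x ^ 2)) ≤ C ^ 2 * C₃ * T ∧
    |entPotential x u * J| ≤ C * (A + 1) * C₃ * (x * T) ∧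
    |entDensity x u| ≤ (2 * A + 1) * T := by
  have hx2 : 0 < x ^ 2 := by positivity
  have hA : 0 < A := hu.trans_le huA
  have g1 := log_add_sub_log_le hu hx2
  have g2 := log_le_log_add hu hx2
  have hl24 : l ^ 2 ≤ l ^ 4 := pow_le_pow_right₀ (by linarith) (by norm_num)
  have hgu : u * (log (u + x ^ 2) - log u) ≤ x ^ 2 := by
    rw [le_div_iff₀ hu] at g1; linarith
  have hxx : x ^ 2 ≤ x := by nlinarith
  refine ⟨?_, ?_, ?_⟩
  · rw [div_le_iff₀ (by positivity)]
    have h1 : J ^ 2 ≤ (C * (u * l ^ 2)) ^ 2 := by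
      rw [← sq_abs]; exact pow_le_pow_left₀ (abs_nonneg _) hJ 2
    have h2 : (C * (u * l ^ 2)) ^ 2 = C ^ 2 * l ^ 4 * (u * u) := by ring
    have h3 : C ^ 2 * l ^ 4 * (u * u) ≤ C ^ 2 * (C₃ * T) * (u * (u + x ^ 2)) := by
      have h4 : 0 ≤ C₃ * T := le_trans (by positivity) hlT
      gcongr
      linarith
    linarith
  · have hq : |entPotential x u| ≤ x + (log (u + x ^ 2) - log u) := by
      rw [entPotential]
      exact abs_le.2 ⟨by linarith, by linarith⟩
    have h1 : |entPotential x u * J| ≤ (x + (log (u + x ^ 2) - log u)) * (C * (u * l ^ 2)) := by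
      rw [abs_mul]
      exact mul_le_mul hq hJ (abs_nonneg _) (by linarith)
    have h2 : (x + (log (u + x ^ 2) - log u)) * (C * (u * l ^ 2))
        = C * l ^ 2 * (x * u + u * (log (u + x ^ 2) - log u)) := by ring
    have h3 : x * u + u * (log (u + x ^ 2) - log u) ≤ (A + 1) * x := by nlinarith
    calc |entPotential x u * J| ≤ C * l ^ 2 * (x * u + u * (log (u + x ^ 2) - log u)) := by
          rw [← h2]; exact h1
      _ ≤ C * l ^ 2 * ((A + 1) * x) := by gcongr
      _ ≤ C * (C₃ * T) * ((A + 1) * x) := by gcongr; linarith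
      _ = _ := by ring
  · have h1 := abs_entDensity_le hx hu
    have h2 : x * u ≤ A := by nlinarith
    have h3 : |entDensity x u| ≤ (2 * A + 1) * 1 := by nlinarith
    exact h3.trans (mul_le_mul_of_nonneg_left hT (by linarith))

/-- The counterpart of `small_x_bounds` for `x ≥ 1`, where the decay `u ≤ A x ^ (-12)` gives the
weight `x ^ (-2)`. -/
lemma large_x_bounds {x u A l J C : ℝ} (hx1 : 1 ≤ x) (hu : 0 < u) (hA : 1 ≤ A)
    (hum : u ≤ A / x ^ 12) (hl : l = 2 + (log (A / x ^ 12) - log u))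
    (hC : 0 ≤ C) (hJ : |J| ≤ C * x ^ 2 * (u * l ^ 2)) :
    J ^ 2 / (u * (u + x ^ 2)) ≤ C ^ 2 * A * (24 * exp 2) * (x ^ 2)⁻¹ ∧
    |entPotential x u * J| ≤ 17 * C * A * (6 * exp 2) * (x * (x ^ 2)⁻¹) ∧
    |entDensity x u| ≤ (2 * A + 17 * A * exp 2) * (x ^ 2)⁻¹ := by
  have hx : 0 < x := by linarith
  have hx2 : 0 < x ^ 2 := by positivity
  have hm : 0 < A / x ^ 12 := by positivity
  have hl2 : 2 ≤ l := by rw [hl]; linarith [log_le_log hu hum]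
  have k1 := mul_log_pow_le hu hum 1
  have k3 := mul_log_pow_le hu hum 3
  have k4 := mul_log_pow_le hu hum 4
  rw [← hl] at k1 k3 k4
  norm_num [Nat.factorial] at k1 k3 k4
  have pw : ∀ k : ℕ, k ≤ 10 → x ^ k * (A / x ^ 12) ≤ A * (x ^ 2)⁻¹ := by
    intro k hk
    rw [← div_eq_mul_inv, mul_div_assoc', div_le_div_iff₀ (by positivity) hx2]
    have : x ^ (k + 2) ≤ x ^ 12 := pow_le_pow_right₀ hx1 (by omega)
    calc x ^ k * A * x ^ 2 = A * x ^ (k + 2) := by ring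
      _ ≤ A * x ^ 12 := by gcongr
  have hlogx : log x ≤ x - 1 := log_le_sub_one_of_pos hx
  have huA : u ≤ A := hum.trans (div_le_self (by linarith) (one_le_pow₀ hx1))
  have g2 := log_le_log_add hu hx2
  have hgl : log (u + x ^ 2) - log u ≤ l + 14 * x := by
    have h01 : A * 1 ≤ A * x ^ 2 := mul_le_mul_of_nonneg_left (one_le_pow₀ hx1) (by linarith)
    have h02 : 1 * x ^ 2 ≤ A * x ^ 2 := mul_le_mul_of_nonneg_right hA hx2.le
    have h1 : log (u + x ^ 2) ≤ log (2 * (A * x ^ 2)) :=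
      log_le_log (by positivity) (by linarith)
    have h2 : log (2 * (A * x ^ 2)) = log 2 + log A + 2 * log x := by
      rw [log_mul (by norm_num) (by positivity), log_mul (by positivity) (by positivity), log_pow]
      push_cast; ring
    have h3 : log (A / x ^ 12) = log A - 12 * log x := by
      rw [log_div (by positivity) (by positivity), log_pow]; push_cast; ring
    have h4 : log 2 ≤ 2 - 1 := log_le_sub_one_of_pos (by norm_num)
    rw [hl, h3]
    linarith
  have hxl : x * 2 ≤ x * l := mul_le_mul_of_nonneg_left hl2 hx.le
  have hll : 1 * l ≤ x * l := mul_le_mul_of_nonneg_right hx1 (by linarith)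
  refine ⟨?_, ?_, ?_⟩
  · rw [div_le_iff₀ (by positivity)]
    have h1 : J ^ 2 ≤ (C * x ^ 2 * (u * l ^ 2)) ^ 2 := by
      rw [← sq_abs]; exact pow_le_pow_left₀ (abs_nonneg _) hJ 2
    have h2 : (C * x ^ 2 * (u * l ^ 2)) ^ 2 = C ^ 2 * (x ^ 2 * (u * l ^ 4)) * (u * x ^ 2) := by ring
    have h3 : x ^ 2 * (u * l ^ 4) ≤ A * (x ^ 2)⁻¹ * (24 * exp 2) := by
      calc x ^ 2 * (u * l ^ 4) ≤ x ^ 2 * (A / x ^ 12 * (24 * exp 2)) := by gcongr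
        _ = x ^ 2 * (A / x ^ 12) * (24 * exp 2) := by ring
        _ ≤ _ := mul_le_mul_of_nonneg_right (pw 2 (by norm_num)) (by positivity)
    calc J ^ 2 ≤ C ^ 2 * (x ^ 2 * (u * l ^ 4)) * (u * x ^ 2) := by rw [← h2]; exact h1
      _ ≤ C ^ 2 * (A * (x ^ 2)⁻¹ * (24 * exp 2)) * (u * (u + x ^ 2)) := by
          gcongr
          linarith
      _ = _ := by ring
  · have hq : |entPotential x u| ≤ 17 * (x * l) := by
      rw [entPotential]
      exact abs_le.2 ⟨by linarith, by linarith⟩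
    have h1 : |entPotential x u * J| ≤ 17 * (x * l) * (C * x ^ 2 * (u * l ^ 2)) := by
      rw [abs_mul]
      exact mul_le_mul hq hJ (abs_nonneg _) (by positivity)
    have h3 : x ^ 2 * (u * l ^ 3) ≤ A * (x ^ 2)⁻¹ * (6 * exp 2) := by
      calc x ^ 2 * (u * l ^ 3) ≤ x ^ 2 * (A / x ^ 12 * (6 * exp 2)) := by gcongr
        _ = x ^ 2 * (A / x ^ 12) * (6 * exp 2) := by ring
        _ ≤ _ := mul_le_mul_of_nonneg_right (pw 2 (by norm_num)) (by positivity)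
    calc |entPotential x u * J| ≤ 17 * (x * l) * (C * x ^ 2 * (u * l ^ 2)) := h1
      _ = 17 * C * x * (x ^ 2 * (u * l ^ 3)) := by ring
      _ ≤ 17 * C * x * (A * (x ^ 2)⁻¹ * (6 * exp 2)) := by gcongr
      _ = _ := by ring
  · have h1 := abs_entDensity_le hx hu
    have h2 : x * u ≤ A * (x ^ 2)⁻¹ := by
      have := pw 1 (by norm_num)
      rw [pow_one] at this
      exact (mul_le_mul_of_nonneg_left hum hx.le).trans this
    have h3 : u ≤ A * (x ^ 2)⁻¹ := by
      have := pw 0 (by norm_num)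
      rw [pow_zero, one_mul] at this
      exact hum.trans this
    have h4 : u * (log (u + x ^ 2) - log u) ≤ 17 * A * exp 2 * (x ^ 2)⁻¹ := by
      calc u * (log (u + x ^ 2) - log u) ≤ u * (17 * (x * l)) := by gcongr; linarith
        _ = 17 * (x * (u * l)) := by ring
        _ ≤ 17 * (x * (A / x ^ 12 * exp 2)) := by gcongr
        _ = 17 * (x ^ 1 * (A / x ^ 12) * exp 2) := by ring
        _ ≤ 17 * (A * (x ^ 2)⁻¹ * exp 2) := mul_le_mul_of_nonneg_left
            (mul_le_mul_of_nonneg_right (pw 1 (by norm_num)) (by positivity)) (by norm_num)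
        _ = _ := by ring
    linarith

lemma weight_of_le {x : ℝ} (h : x ≤ 1) : weight x = x ^ (-1 / 2 : ℝ) := if_pos h

lemma weight_of_lt {x : ℝ} (h : 1 < x) : weight x = (x ^ 2)⁻¹ := by
  rw [weight, if_neg (not_le.2 h), rpow_neg (by linarith)]
  norm_num

lemma one_sub_log_pow_le {x : ℝ} (hx : 0 < x) (hx1 : x ≤ 1) :
    (1 - log x) ^ 8 ≤ (2 ^ 8 * (8).factorial * exp (1 / 2)) * x ^ (-1 / 2 : ℝ) := by
  have hlog : log x ≤ 0 := log_nonpos hx.le hx1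
  have h1 := Real.pow_div_factorial_le_exp ((1 - log x) / 2) (by linarith) 8
  rw [div_le_iff₀ (by positivity)] at h1
  have h2 : exp ((1 - log x) / 2) = exp (1 / 2) * x ^ (-1 / 2 : ℝ) := by
    rw [rpow_def_of_pos hx, ← exp_add]; congr 1; ring
  rw [h2, div_pow] at h1
  rw [div_le_iff₀ (by positivity)] at h1
  linarith

lemma weight_integrableOn : IntegrableOn weight (Ioi 0) := by
  rw [← Ioc_union_Ioi_eq_Ioi (zero_le_one' ℝ)]
  refine IntegrableOn.union ?_ ?_
  · have h1 : IntegrableOn (fun x : ℝ => x ^ (-1 / 2 : ℝ)) (Ioc 0 1) := by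
      have := intervalIntegral.intervalIntegrable_rpow' (a := 0) (b := 1) (r := -1 / 2) (by norm_num)
      rwa [intervalIntegrable_iff_integrableOn_Ioc_of_le zero_le_one] at this
    exact h1.congr_fun (fun x hx => (weight_of_le hx.2).symm) measurableSet_Ioc
  · have h1 : IntegrableOn (fun x : ℝ => x ^ (-2 : ℝ)) (Ioi 1) :=
      integrableOn_Ioi_rpow_of_lt (by norm_num) one_pos
    exact h1.congr_fun (fun x hx => (if_neg (not_le.2 hx)).symm) measurableSet_Ioi

lemma weight_nonneg {x : ℝ} (hx : 0 < x) : 0 ≤ weight x := by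
  rw [weight]; split_ifs <;> positivity

/-- Uniform pointwise bounds, on a compact window of positive times, for the entropy dissipation,
the boundary term of the integration by parts, and the entropy density. -/
lemma IsKompSol.pointwise_bounds {n : ℝ → ℝ → ℝ} {n₀ : ℝ → ℝ} (h : IsKompSol n n₀)
    (hpos : ∀ x t, 0 < x → 0 < t → 0 < n x t) {t₁ t₂ : ℝ} (ht₁ : 0 < t₁) (h12 : t₁ ≤ t₂) :
    ∃ B, 0 ≤ B ∧ ∀ x, 0 < x → ∀ t ∈ Icc t₁ t₂,
      kompFlux (fun z => n z t) x ^ 2 / (n x t * (n x t + x ^ 2)) ≤ B * weight x ∧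
      |entPotential x (n x t) * kompFlux (fun z => n z t) x| ≤ B * (x * weight x) ∧
      |entDensity x (n x t)| ≤ B * weight x := by
  obtain ⟨M, S⟩ := h.logSol
  have hp : ∀ y t, 0 < t → 0 < n (exp y) t := fun y t ht => hpos _ _ (exp_pos y) ht
  obtain ⟨C, A, hC, hMA, hmaj, hgrad⟩ := S.gradient_bound hp ht₁ h12
  obtain ⟨ε, κ, hε, hκ, hlow⟩ := S.gaussian_lower_bound hp ht₁ h12
  have hA : 1 ≤ A := S.one_le.trans hMA
  obtain ⟨C', hC'⟩ : ∃ C', C' = C + 1 + A := ⟨_, rfl⟩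
  have hC'0 : 0 ≤ C' := by linarith
  obtain ⟨c, hc⟩ : ∃ c, c = 2 + |log A - log ε| + κ := ⟨_, rfl⟩
  have hc0 : 0 ≤ c := by have := abs_nonneg (log A - log ε); linarith
  obtain ⟨C₃, hC₃⟩ : ∃ C₃, C₃ = c ^ 4 * (2 ^ 8 * (8).factorial * exp (1 / 2)) := ⟨_, rfl⟩
  have hC₃0 : 0 ≤ C₃ := by rw [hC₃]; positivity
  -- a single constant exceeding the six constants of the two regimes
  obtain ⟨B, hB⟩ : ∃ B, B = C' ^ 2 * C₃ + C' * (A + 1) * C₃ + (2 * A + 1)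
    + C' ^ 2 * A * (24 * exp 2) + 17 * C' * A * (6 * exp 2) + (2 * A + 17 * A * exp 2) := ⟨_, rfl⟩
  have p1 : 0 ≤ C' ^ 2 * C₃ := by positivity
  have p2 : 0 ≤ C' * (A + 1) * C₃ := by positivity
  have p3 : 0 ≤ 2 * A + 1 := by positivity
  have p4 : 0 ≤ C' ^ 2 * A * (24 * exp 2) := by positivity
  have p5 : 0 ≤ 17 * C' * A * (6 * exp 2) := by positivity
  have p6 : 0 ≤ 2 * A + 17 * A * exp 2 := by positivity
  refine ⟨B, by linarith, fun x hx t ht => ?_⟩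
  have ht0 : 0 < t := ht₁.trans_le ht.1
  have hu := hpos x t hx ht0
  have e1 := hmaj (log x) t ht
  have e2 := hgrad (log x) t ht
  simp only [exp_log hx] at e1 e2
  obtain ⟨u, hudef⟩ : ∃ u, u = n x t := ⟨_, rfl⟩
  obtain ⟨d, hd⟩ : ∃ d, d = deriv (fun z => n z t) x := ⟨_, rfl⟩
  obtain ⟨l, hl⟩ : ∃ l, l = 2 + (log (majorant A (log x)) - log u) := ⟨_, rfl⟩
  have hJdef : kompFlux (fun z => n z t) x = x * (x * d) + (x ^ 2 - 2 * x) * u + u ^ 2 := by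
    rw [kompFlux, hd, hudef]; ring
  obtain ⟨J, hJ⟩ : ∃ J, J = kompFlux (fun z => n z t) x := ⟨_, rfl⟩
  rw [← hudef] at hu e1 e2 ⊢
  rw [← hd, ← hl] at e2
  rw [← hJ] at hJdef ⊢
  have hl2 : 2 ≤ l := by rw [hl]; linarith [log_le_log hu e1]
  have hul : u ≤ u * l ^ 2 := le_mul_of_one_le_right hu.le (by nlinarith)
  have hJ3 : |J| ≤ |x * (x * d)| + |(x ^ 2 - 2 * x) * u| + |u ^ 2| := by
    rw [hJdef]; exact abs_add_three _ _ _
  rw [abs_mul x, abs_of_pos hx, abs_mul (x ^ 2 - 2 * x), abs_of_pos hu, abs_of_nonneg (sq_nonneg u)]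
    at hJ3
  rcases le_or_gt x 1 with hx1 | hx1
  · have hlog : log x ≤ 0 := log_nonpos hx.le hx1
    have hm : majorant A (log x) = A := by
      rw [majorant, max_eq_right hlog]; simp
    rw [hm] at e1 hl
    have hexp : exp |log x| = x⁻¹ := by rw [abs_of_nonpos hlog, exp_neg, exp_log hx]
    rw [hexp] at e2
    have hJb : |J| ≤ C' * (u * l ^ 2) := by
      have f1 : x * |x * d| ≤ C * (u * l ^ 2) := by
        calc x * |x * d| ≤ x * (C * x⁻¹ * (u * l ^ 2)) := mul_le_mul_of_nonneg_left e2 hx.le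
          _ = _ := by field_simp
      have f2 : |x ^ 2 - 2 * x| * u ≤ 1 * (u * l ^ 2) :=
        mul_le_mul (abs_le.2 ⟨by nlinarith only [sq_nonneg (x - 1)], by nlinarith only [hx, hx1]⟩)
          hul hu.le zero_le_one
      have f3 : u ^ 2 ≤ A * (u * l ^ 2) := by
        rw [sq]; exact mul_le_mul e1 hul hu.le (by linarith)
      rw [hC']; linarith
    have hlc : l ≤ c * (1 - log x) ^ 2 := by
      have f1 := hlow (log x) hlog t ht
      rw [exp_log hx, ← hudef] at f1
      have f2 := log_le_log (by positivity) f1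
      rw [log_mul hε.ne' (exp_pos _).ne', log_exp] at f2
      have f3 := le_abs_self (log A - log ε)
      have f4 : 1 ≤ (1 - log x) ^ 2 := by nlinarith only [hlog]
      have f5 : (2 + |log A - log ε|) * 1 ≤ (2 + |log A - log ε|) * (1 - log x) ^ 2 := by gcongr
      rw [hl, hc]
      linarith
    have hl4 : l ^ 4 ≤ C₃ * x ^ (-1 / 2 : ℝ) := by
      calc l ^ 4 ≤ (c * (1 - log x) ^ 2) ^ 4 := pow_le_pow_left₀ (by linarith) hlc 4
        _ = c ^ 4 * (1 - log x) ^ 8 := by ring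
        _ ≤ c ^ 4 * ((2 ^ 8 * (8).factorial * exp (1 / 2)) * x ^ (-1 / 2 : ℝ)) :=
            mul_le_mul_of_nonneg_left (one_sub_log_pow_le hx hx1) (by positivity)
        _ = _ := by rw [hC₃]; ring
    have hT : 1 ≤ x ^ (-1 / 2 : ℝ) := one_le_rpow_of_pos_of_le_one_of_nonpos hx hx1 (by norm_num)
    obtain ⟨b1, b2, b3⟩ := small_x_bounds hx hx1 hu e1 hl2 hC'0 hJb hl4 hT
    rw [weight_of_le hx1]
    have hT0 : 0 ≤ x ^ (-1 / 2 : ℝ) := by linarith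
    exact ⟨b1.trans (mul_le_mul_of_nonneg_right (by linarith) hT0),
      b2.trans (mul_le_mul_of_nonneg_right (by linarith) (mul_nonneg hx.le hT0)),
      b3.trans (mul_le_mul_of_nonneg_right (by linarith) hT0)⟩
  · have hlog : 0 ≤ log x := log_nonneg hx1.le
    have hm : majorant A (log x) = A / x ^ 12 := by
      rw [majorant, max_eq_left hlog, div_eq_mul_inv]
      congr 1
      rw [show -12 * log x = -((12 : ℕ) * log x) by push_cast; ring, exp_neg, exp_nat_mul,
        exp_log hx]
    rw [hm] at e1 hl
    have hexp : exp |log x| = x := by rw [abs_of_nonneg hlog, exp_log hx]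
    rw [hexp] at e2
    have huA : u ≤ A := e1.trans (div_le_self (by linarith) (one_le_pow₀ hx1.le))
    have hx2 : 1 ≤ x ^ 2 := one_le_pow₀ hx1.le
    have hJb : |J| ≤ C' * x ^ 2 * (u * l ^ 2) := by
      have f1 : x * |x * d| ≤ C * x ^ 2 * (u * l ^ 2) := by
        calc x * |x * d| ≤ x * (C * x * (u * l ^ 2)) := mul_le_mul_of_nonneg_left e2 hx.le
          _ = _ := by ring
      have f2 : |x ^ 2 - 2 * x| * u ≤ x ^ 2 * (u * l ^ 2) :=
        mul_le_mul (abs_le.2 ⟨by nlinarith only [hx1], by nlinarith only [hx1]⟩)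
          hul hu.le (by linarith)
      have f3 : u ^ 2 ≤ A * x ^ 2 * (u * l ^ 2) := by
        rw [sq]
        exact mul_le_mul (huA.trans (le_mul_of_one_le_right (by linarith) hx2)) hul hu.le
          (by positivity)
      rw [hC']; linarith
    obtain ⟨b1, b2, b3⟩ := large_x_bounds hx1.le hu hA e1 hl hC'0 hJb
    rw [weight_of_lt hx1]
    have hT0 : 0 ≤ (x ^ 2)⁻¹ := by positivity
    exact ⟨b1.trans (mul_le_mul_of_nonneg_right (by linarith) hT0),
      b2.trans (mul_le_mul_of_nonneg_right (by linarith) (mul_nonneg hx.le hT0)),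
      b3.trans (mul_le_mul_of_nonneg_right (by linarith) hT0)⟩

/-! ### The truncated entropy -/

lemma entDensity_hasDerivAt {x u : ℝ} (hu : 0 < u) :
    HasDerivAt (entDensity x) (entPotential x u) u := by
  have hux : u + x ^ 2 ≠ 0 := by positivity
  have d1 := (hasDerivAt_id u).mul (hasDerivAt_log hu.ne')
  have d2 := ((hasDerivAt_id u).add_const (x ^ 2))
  have d3 := d2.mul (d2.log hux)
  have := ((((hasDerivAt_id u).const_mul x).add d1).sub d3).add_const (x ^ 2 * log (x ^ 2))
  refine this.congr_deriv ?_
  simp only [id, entPotential]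
  field_simp
  ring

namespace IsKompSol

variable {n : ℝ → ℝ → ℝ} {n₀ : ℝ → ℝ}

/-- The spatial derivative of the chemical-potential-like quantity `entPotential x (n x t)` is
the flux divided by the mobility `n (n + x²)`. -/
lemma entPotential_hasDerivAt (h : IsKompSol n n₀) (hpos : ∀ x t, 0 < x → 0 < t → 0 < n x t)
    {x t : ℝ} (hx : 0 < x) (ht : 0 < t) :
    HasDerivAt (fun y => entPotential y (n y t))
      (kompFlux (fun z => n z t) x / (n x t * (n x t + x ^ 2))) x := by
  have hu := hpos x t hx ht
  have hux : n x t + x ^ 2 ≠ 0 := by positivity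
  have d1 := (h.diff_x t ht x hx).hasDerivAt
  have := ((hasDerivAt_id x).add (d1.log hu.ne')).sub
    ((d1.add ((hasDerivAt_id x).pow 2)).log hux)
  refine this.congr_deriv ?_
  simp only [id, Pi.add_apply, Pi.pow_apply, kompFlux]
  field_simp
  ring

lemma continuousOn_slice (h : IsKompSol n n₀) {t : ℝ} (ht : 0 < t) :
    ContinuousOn (fun x => n x t) (Ioi 0) := fun x hx =>
  (h.diff_x t ht x hx).continuousAt.continuousWithinAt

lemma continuousOn_flux (h : IsKompSol n n₀) {t : ℝ} (ht : 0 < t) :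
    ContinuousOn (kompFlux fun z => n z t) (Ioi 0) := fun _ hx =>
  (kompFlux_hasDerivAt h hx ht).continuousAt.continuousWithinAt

lemma continuousOn_entDensity (h : IsKompSol n n₀) (hpos : ∀ x t, 0 < x → 0 < t → 0 < n x t)
    {t : ℝ} (ht : 0 < t) : ContinuousOn (fun x => entDensity x (n x t)) (Ioi 0) := by
  have hc := h.continuousOn_slice ht
  have hl := hc.log fun x hx => (hpos x t hx ht).ne'
  have hs : ContinuousOn (fun x => n x t + x ^ 2) (Ioi 0) := hc.add (by fun_prop)
  have hl2 := hs.log fun x hx => by have := hpos x t hx ht; positivity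
  have hx2 : ContinuousOn (fun x : ℝ => x ^ 2) (Ioi 0) := by fun_prop
  have hl3 := hx2.log fun x hx => by have : 0 < x := hx; positivity
  exact (((continuousOn_id.mul hc).add (hc.mul hl)).sub (hs.mul hl2)).add (hx2.mul hl3)

lemma continuousOn_dissipation (h : IsKompSol n n₀) (hpos : ∀ x t, 0 < x → 0 < t → 0 < n x t)
    {t : ℝ} (ht : 0 < t) :
    ContinuousOn (fun x => kompFlux (fun z => n z t) x / (n x t * (n x t + x ^ 2))) (Ioi 0) := by
  have hc := h.continuousOn_slice ht
  refine (h.continuousOn_flux ht).div (hc.mul (hc.add (by fun_prop))) fun x hx => ?_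
  have := hpos x t hx ht
  positivity

/-- Differentiation of the truncated entropy, followed by an integration by parts. -/
lemma truncated_hasDerivAt (h : IsKompSol n n₀) (hpos : ∀ x t, 0 < x → 0 < t → 0 < n x t)
    {a b t : ℝ} (ha : 0 < a) (hab : a ≤ b) (ht : 0 < t) :
    HasDerivAt (fun τ => ∫ x in a..b, entDensity x (n x τ))
      (entPotential b (n b t) * kompFlux (fun z => n z t) b
        - entPotential a (n a t) * kompFlux (fun z => n z t) a
        - ∫ x in a..b, kompFlux (fun z => n z t) x ^ 2 / (n x t * (n x t + x ^ 2))) t := by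
  obtain ⟨M, S⟩ := h.logSol
  have hp : ∀ y t, 0 < t → 0 < n (exp y) t := fun y t ht => hpos _ _ (exp_pos y) ht
  obtain ⟨C, hC⟩ := S.gt_locally_bounded hp (half_pos ht) (by linarith : t / 2 ≤ 2 * t)
    (max |log a| |log b|)
  have hsub : Icc a b ⊆ Ioi 0 := fun x hx => ha.trans_le hx.1
  have hnt : ∀ x ∈ Icc a b, ∀ s ∈ Icc (t / 2) (2 * t), |deriv (fun τ => n x τ) s| ≤ C := by
    intro x hx s hs
    have hx0 : 0 < x := hsub hx
    have h1 := hC (log x) ?_ s hs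
    · simpa only [exp_log hx0] using h1
    · exact abs_le_max_abs_abs (log_le_log ha hx.1) (log_le_log hx0 hx.2)
  obtain ⟨Q, hQ⟩ : ∃ Q, ∀ p ∈ Icc a b ×ˢ Icc (t / 2) (2 * t), ‖entPotential p.1 (n p.1 p.2)‖ ≤ Q := by
    refine (isCompact_Icc.prod isCompact_Icc).exists_bound_of_continuousOn ?_
    have hc : ContinuousOn (fun p : ℝ × ℝ => n p.1 p.2) (Icc a b ×ˢ Icc (t / 2) (2 * t)) :=
      h.contOn.mono (prod_mono hsub fun s hs => (half_pos ht).trans_le hs.1)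
    have hp' : ∀ p ∈ Icc a b ×ˢ Icc (t / 2) (2 * t), 0 < n p.1 p.2 := fun p hp' =>
      hpos _ _ (hsub hp'.1) ((half_pos ht).trans_le hp'.2.1)
    exact (continuousOn_fst.add (hc.log fun p hp => (hp' p hp).ne')).sub
      ((hc.add (continuousOn_fst.pow 2)).log fun p hp => by
        exact (add_pos_of_pos_of_nonneg (hp' p hp) (sq_nonneg p.1)).ne')
  have huI : uIoc a b ⊆ Icc a b := by rw [uIoc_of_le hab]; exact Ioc_subset_Icc_self
  have huIcc : uIcc a b = Icc a b := uIcc_of_le hab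
  have hnbhd : Icc (t / 2) (2 * t) ∈ 𝓝 t := Icc_mem_nhds (by linarith) (by linarith)
  have hqc : ContinuousOn (fun x => entPotential x (n x t)) (Ioi 0) := fun x hx =>
    (h.entPotential_hasDerivAt hpos hx ht).continuousAt.continuousWithinAt
  have hq0 : 0 ≤ Q := (norm_nonneg _).trans
    (hQ (a, t) ⟨left_mem_Icc.2 hab, by constructor <;> linarith⟩)
  have hvm : AEStronglyMeasurable (fun x => deriv (fun τ => n x τ) t) (volume.restrict (uIoc a b)) := by
    refine (measurable_deriv (kompFlux fun z => n z t)).aestronglyMeasurable.congr ?_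
    filter_upwards [ae_restrict_mem measurableSet_uIoc] with x hx
    exact (h.pde x (hsub (huI hx)) t ht).symm
  have key := intervalIntegral.hasDerivAt_integral_of_dominated_loc_of_deriv_le
    (μ := volume) (a := a) (b := b) (bound := fun _ => Q * C)
    (F := fun τ x => entDensity x (n x τ))
    (F' := fun τ x => entPotential x (n x τ) * deriv (fun s => n x s) τ) hnbhd
    (by
      filter_upwards [hnbhd] with τ hτ
      exact ((h.continuousOn_entDensity hpos ((half_pos ht).trans_le hτ.1)).mono
        (huI.trans hsub)).aestronglyMeasurable measurableSet_uIoc)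
    (((h.continuousOn_entDensity hpos ht).mono (huIcc ▸ hsub)).intervalIntegrable)
    (((hqc.mono (huI.trans hsub)).aestronglyMeasurable measurableSet_uIoc).mul hvm)
    (ae_of_all _ fun x hx τ hτ => by
      rw [norm_mul]
      exact mul_le_mul (hQ (x, τ) ⟨huI hx, hτ⟩) (hnt x (huI hx) τ hτ) (norm_nonneg _) hq0)
    intervalIntegrable_const
    (ae_of_all _ fun x hx τ hτ => by
      have hx0 : 0 < x := hsub (huI hx)
      have hτ0 : 0 < τ := (half_pos ht).trans_le hτ.1
      exact (entDensity_hasDerivAt (hpos x τ hx0 hτ0)).comp τ (h.diff_t x hx0 τ hτ0).hasDerivAt)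
  refine key.2.congr_deriv ?_
  have hv' : IntervalIntegrable (fun x => deriv (fun τ => n x τ) t) volume a b := by
    refine (intervalIntegrable_const (c := C)).mono_fun hvm ?_
    filter_upwards [ae_restrict_mem measurableSet_uIoc] with x hx
    exact (hnt x (huI hx) t ⟨by linarith, by linarith⟩).trans (le_abs_self C)
  have parts := intervalIntegral.integral_mul_deriv_eq_deriv_mul
    (a := a) (b := b) (u := fun x => entPotential x (n x t)) (v := kompFlux fun z => n z t)
    (u' := fun x => kompFlux (fun z => n z t) x / (n x t * (n x t + x ^ 2)))
    (v' := fun x => deriv (fun τ => n x τ) t)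
    (fun x hx => h.entPotential_hasDerivAt hpos (hsub (huIcc ▸ hx)) ht)
    (fun x hx => by
      have hx0 : 0 < x := hsub (huIcc ▸ hx)
      rw [h.pde x hx0 t ht]
      exact (kompFlux_hasDerivAt h hx0 ht).differentiableAt.hasDerivAt)
    ((h.continuousOn_dissipation hpos ht).mono (huIcc ▸ hsub)).intervalIntegrable hv'
  rw [parts]
  congr 2
  ext x
  ring

end IsKompSol

/-! ### Removal of the truncation -/

/-- The exhaustion `(1 / (k + 1), k + 1]` of `(0, ∞)`. -/
def exhaust (k : ℕ) : Set ℝ := Ioc (((k : ℝ) + 1)⁻¹) ((k : ℝ) + 1)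

lemma exhaust_mono : Monotone exhaust := by
  intro i j hij
  have h : (i : ℝ) ≤ j := by exact_mod_cast hij
  exact Ioc_subset_Ioc (inv_anti₀ (by positivity) (by linarith)) (by linarith)

lemma iUnion_exhaust : ⋃ k, exhaust k = Ioi 0 := by
  ext x
  simp only [mem_iUnion, exhaust, mem_Ioc, mem_Ioi]
  constructor
  · rintro ⟨k, h1, -⟩
    exact lt_trans (by positivity) h1
  · intro hx
    obtain ⟨k, hk⟩ := exists_nat_gt (max x x⁻¹)
    have h1 := (le_max_left x x⁻¹).trans_lt hk
    have h2 := (le_max_right x x⁻¹).trans_lt hk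
    exact ⟨k, inv_lt_of_inv_lt₀ hx (by linarith), by linarith⟩

lemma tendsto_integral_exhaust {f : ℝ → ℝ} (hf : IntegrableOn f (Ioi 0)) :
    Tendsto (fun k => ∫ x in exhaust k, f x) atTop (𝓝 (∫ x in Ioi 0, f x)) := by
  rw [← iUnion_exhaust] at hf ⊢
  exact tendsto_setIntegral_of_monotone (fun _ => measurableSet_Ioc) exhaust_mono hf

lemma tendsto_mul_weight_atTop :
    Tendsto (fun k : ℕ => ((k : ℝ) + 1) * weight ((k : ℝ) + 1)) atTop (𝓝 0) := by
  have h1 : Tendsto (fun k : ℕ => ((k : ℝ) + 1)⁻¹) atTop (𝓝 0) := by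
    simpa only [one_div] using tendsto_one_div_add_atTop_nhds_zero_nat (𝕜 := ℝ)
  refine h1.congr' ?_
  filter_upwards [eventually_gt_atTop 0] with k hk
  have : (0 : ℝ) < k := by exact_mod_cast hk
  rw [weight_of_lt (by linarith)]
  field_simp

lemma tendsto_mul_weight_zero :
    Tendsto (fun k : ℕ => ((k : ℝ) + 1)⁻¹ * weight (((k : ℝ) + 1)⁻¹)) atTop (𝓝 0) := by
  have h1 : Tendsto (fun k : ℕ => ((k : ℝ) + 1)⁻¹) atTop (𝓝 0) := by
    simpa only [one_div] using tendsto_one_div_add_atTop_nhds_zero_nat (𝕜 := ℝ)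
  have h2 : Tendsto (fun x : ℝ => x ^ (1 / 2 : ℝ)) (𝓝 0) (𝓝 0) := by
    have := (continuous_rpow_const (by norm_num : (0 : ℝ) ≤ 1 / 2)).tendsto 0
    rwa [zero_rpow (by norm_num)] at this
  refine (h2.comp h1).congr fun k => ?_
  have hx : (0 : ℝ) < ((k : ℝ) + 1)⁻¹ := by positivity
  rw [weight_of_le (inv_le_one_of_one_le₀ (by linarith [k.cast_nonneg (α := ℝ)])),
    ← rpow_one_add' hx.le (by norm_num), Function.comp_apply]
  norm_num

/-- The dissipation identity for positive solutions: on the time interval `(t / 2, 2 t)` the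
entropies truncated to `[1 / (k + 1), k + 1]` converge, and their derivatives converge uniformly. -/
lemma IsKompSol.hasDerivAt_Hent_of_pos {n : ℝ → ℝ → ℝ} {n₀ : ℝ → ℝ} (h : IsKompSol n n₀)
    (hpos : ∀ x t, 0 < x → 0 < t → 0 < n x t) {t : ℝ} (ht : 0 < t) :
    HasDerivAt (fun τ => Hent (fun x => n x τ))
      (-(∫ x in Ioi (0 : ℝ), kompFlux (fun z => n z t) x ^ 2 / (n x t * (n x t + x ^ 2)))) t := by
  obtain ⟨B, hB, hb⟩ := h.pointwise_bounds hpos (half_pos ht) (by linarith : t / 2 ≤ 2 * t)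
  have hw : IntegrableOn (fun x => B * weight x) (Ioi 0) := weight_integrableOn.const_mul B
  have hs0 : ∀ s ∈ Ioo (t / 2) (2 * t), 0 < s := fun s hs => (half_pos ht).trans hs.1
  have hdiss : ∀ s ∈ Ioo (t / 2) (2 * t), IntegrableOn
      (fun x => kompFlux (fun z => n z s) x ^ 2 / (n x s * (n x s + x ^ 2))) (Ioi 0) := by
    intro s hs
    refine hw.mono' ?_ ?_
    · have := ((h.continuousOn_flux (hs0 s hs)).mul
        (h.continuousOn_dissipation hpos (hs0 s hs))).aestronglyMeasurable
        (μ := volume) measurableSet_Ioi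
      refine this.congr (ae_of_all _ fun x => ?_)
      simp only [Pi.mul_apply]
      ring
    · filter_upwards [ae_restrict_mem measurableSet_Ioi] with x hx
      have hp := hpos x s hx (hs0 s hs)
      rw [Real.norm_of_nonneg (by positivity)]
      exact (hb x hx s (Ioo_subset_Icc_self hs)).1
  have hdens : ∀ s ∈ Ioo (t / 2) (2 * t),
      IntegrableOn (fun x => entDensity x (n x s)) (Ioi 0) := by
    intro s hs
    refine hw.mono' ((h.continuousOn_entDensity hpos (hs0 s hs)).aestronglyMeasurable
      measurableSet_Ioi) ?_
    filter_upwards [ae_restrict_mem measurableSet_Ioi] with x hx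
    exact (hb x hx s (Ioo_subset_Icc_self hs)).2.2
  have hle : ∀ k : ℕ, ((k : ℝ) + 1)⁻¹ ≤ (k : ℝ) + 1 := fun k => by
    have h1 : (1 : ℝ) ≤ (k : ℝ) + 1 := by linarith [k.cast_nonneg (α := ℝ)]
    exact (inv_le_one_of_one_le₀ h1).trans h1
  have hsubset : ∀ k, exhaust k ⊆ Ioi 0 := fun k => iUnion_exhaust ▸ subset_iUnion exhaust k
  refine hasDerivAt_of_tendstoUniformlyOn (l := (atTop : Filter ℕ)) (s := Ioo (t / 2) (2 * t))
    (f := fun k τ => ∫ x in (((k : ℝ) + 1)⁻¹)..((k : ℝ) + 1), entDensity x (n x τ))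
    (f' := fun k τ => entPotential ((k : ℝ) + 1) (n ((k : ℝ) + 1) τ)
          * kompFlux (fun z => n z τ) ((k : ℝ) + 1)
        - entPotential (((k : ℝ) + 1)⁻¹) (n (((k : ℝ) + 1)⁻¹) τ)
          * kompFlux (fun z => n z τ) (((k : ℝ) + 1)⁻¹)
        - ∫ x in (((k : ℝ) + 1)⁻¹)..((k : ℝ) + 1),
            kompFlux (fun z => n z τ) x ^ 2 / (n x τ * (n x τ + x ^ 2)))
    (g' := fun τ => -(∫ x in Ioi (0 : ℝ),
      kompFlux (fun z => n z τ) x ^ 2 / (n x τ * (n x τ + x ^ 2))))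
    isOpen_Ioo ?_ ?_ ?_ ⟨by linarith, by linarith⟩
  · -- The boundary terms and the tails of the dissipation are controlled by `weight` alone.
    have herr : Tendsto (fun k : ℕ => B * (((k : ℝ) + 1) * weight ((k : ℝ) + 1))
        + B * (((k : ℝ) + 1)⁻¹ * weight (((k : ℝ) + 1)⁻¹))
        + ((∫ x in Ioi 0, B * weight x) - ∫ x in exhaust k, B * weight x)) atTop (𝓝 0) := by
      have := ((tendsto_mul_weight_atTop.const_mul B).add
        (tendsto_mul_weight_zero.const_mul B)).add
        (tendsto_const_nhds (x := ∫ x in Ioi 0, B * weight x) |>.sub (tendsto_integral_exhaust hw))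
      simpa using this
    rw [Metric.tendstoUniformlyOn_iff]
    intro ε hε
    filter_upwards [herr.eventually_lt_const hε] with k hk s hs
    refine lt_of_le_of_lt ?_ hk
    have hsI := Ioo_subset_Icc_self hs
    have b1 := (hb ((k : ℝ) + 1) (by positivity) s hsI).2.1
    have b2 := (hb (((k : ℝ) + 1)⁻¹) (by positivity) s hsI).2.1
    have e1 := setIntegral_sdiff measurableSet_Ioc (hdiss s hs) (hsubset k)
    have e2 := setIntegral_sdiff measurableSet_Ioc hw (hsubset k)
    have hmono : ∫ x in Ioi 0 \ exhaust k,
          kompFlux (fun z => n z s) x ^ 2 / (n x s * (n x s + x ^ 2))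
        ≤ ∫ x in Ioi 0 \ exhaust k, B * weight x :=
      setIntegral_mono_on ((hdiss s hs).mono_set sdiff_subset) (hw.mono_set sdiff_subset)
        (measurableSet_Ioi.diff measurableSet_Ioc) fun x hx => (hb x hx.1 s hsI).1
    have hnn : 0 ≤ ∫ x in Ioi 0 \ exhaust k,
          kompFlux (fun z => n z s) x ^ 2 / (n x s * (n x s + x ^ 2)) := by
      refine setIntegral_nonneg (measurableSet_Ioi.diff measurableSet_Ioc) fun x hx => ?_
      have hp := hpos x s hx.1 (hs0 s hs)
      positivity
    rw [Real.dist_eq, intervalIntegral.integral_of_le (hle k)]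
    rw [← exhaust] at e1 e2 ⊢
    rw [abs_le] at b1 b2 ⊢
    obtain ⟨b1l, b1r⟩ := b1
    obtain ⟨b2l, b2r⟩ := b2
    constructor <;> linarith
  · exact Eventually.of_forall fun k s hs =>
      h.truncated_hasDerivAt hpos (by positivity) (hle k) (hs0 s hs)
  · intro s hs
    refine (tendsto_integral_exhaust (hdens s hs)).congr fun k => ?_
    rw [intervalIntegral.integral_of_le (hle k), exhaust]

/-- The dissipation identity without a positivity assumption: by the strong maximum principle the
remaining case is that of a solution vanishing at all positive times, which is trivial. -/
lemma IsKompSol.hasDerivAt_Hent {n : ℝ → ℝ → ℝ} {n₀ : ℝ → ℝ} (h : IsKompSol n n₀)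
    {t : ℝ} (ht : 0 < t) :
    HasDerivAt (fun τ => Hent (fun x => n x τ))
      (-(∫ x in Ioi (0 : ℝ), kompFlux (fun z => n z t) x ^ 2 / (n x t * (n x t + x ^ 2)))) t := by
  obtain ⟨M, S⟩ := h.logSol
  rcases S.zero_or_pos with h0 | hp
  · have hz : ∀ x s, 0 < x → 0 < s → n x s = 0 := fun x s hx hs => by
      simpa only [exp_log hx] using h0 (log x) s hs
    -- here the quotient is `x / 0 = 0`
    have e1 : ∫ x in Ioi (0 : ℝ),
        kompFlux (fun z => n z t) x ^ 2 / (n x t * (n x t + x ^ 2)) = 0 := by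
      refine setIntegral_eq_zero_of_forall_eq_zero fun x hx => ?_
      simp [hz x t hx ht]
    rw [e1, neg_zero]
    refine (hasDerivAt_const t (0 : ℝ)).congr_of_eventuallyEq ?_
    filter_upwards [lt_mem_nhds ht] with s hs
    refine setIntegral_eq_zero_of_forall_eq_zero fun x hx => ?_
    simp [hz x s hx hs]
  · refine h.hasDerivAt_Hent_of_pos (fun x s hx hs => ?_) ht
    simpa only [exp_log hx] using hp (log x) s hs

theorem entropy_dissipation
    (n : ℝ → ℝ → ℝ) (n₀ : ℝ → ℝ)
    (hsol : IsKompSol n n₀)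
    (h0nonneg : ∀ x : ℝ, 0 < x → 0 ≤ n₀ x)
    (h0bdd : ∃ C : ℝ, ∀ x : ℝ, 0 < x → n₀ x ≤ C)
    (h0decay : Filter.Tendsto (fun x => x ^ 2 * n₀ x) Filter.atTop (nhds 0))
    (hne : ∃ x : ℝ, 0 < x ∧ n₀ x ≠ 0)
    (C₀ : ℝ) (hC₀ : 0 < C₀)
    (hexp : ∀ x : ℝ, 0 < x → n₀ x ≤ C₀ * (1 + x ^ 2) * Real.exp (-x)) :
    ∀ t : ℝ, 0 < t →
      HasDerivAt (fun τ => Hent (fun x => n x τ))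
        (-(∫ x in Set.Ioi (0:ℝ),
            kompFlux (fun z => n z t) x ^ 2 / (n x t * (n x t + x ^ 2)))) t := by
  exact fun t ht => hsol.hasDerivAt_Hent ht
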